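/- arXiv:math/0210438 — 4 statements merged into one kernel-verified Lean document; each statement's English description precedes it below -/
import Mathlib

section
/- Every automorphism φ of the free product C_k ⋆ ℤ (with k ≥ 2), presented as ⟨u, v | u^k = 1⟩, is of the form φ = ν_{ε,r,s} ∘ ι_g for some g in the group, some ε ∈ {1, -1}, and some r, s ∈ {0, 1, ..., k-1} with r coprime to k, where ν_{ε,r,s} is the automorphism sending u ↦ u^r and v ↦ v^ε u^s. -/
/-- Relators for the free product `C_k ⋆ ℤ = ⟨u, v | u^k = 1⟩`,
with `u = of 0`, `v = of 1`. -/
def relCkZ (k : ℕ) : Set (FreeGroup (Fin 2)) :=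
  {FreeGroup.of 0 ^ k}

/-!
Write `C_k ⋆ ℤ` as a free product of two cyclic factors. By cyclic reduction, an element of finite
order is conjugate into a factor, hence into `C_k`, the factor `ℤ` being torsion-free; so after an
inner automorphism the automorphism sends `u` into `C_k`, and it sends `v` to some `w` such that
`C_k` and `w` generate. Up to factors in `C_k` on either side, `w` is a reduced word `h` beginning
and ending in `ℤ`. Its nonzero powers are reduced words of this kind no shorter than `h`, so in an
alternating product of such powers and elements of `C_k` nothing cancels, and the reduced words
beginning in `ℤ` that are obtained are no shorter than `h`. Since `v` is obtained, `h` is a single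
letter, necessarily a generator of `ℤ`.
-/

section Cyclic

open Subgroup

variable {G : Type*} [Group G]

theorem sup_zpowers_mul_mul {H : Subgroup G} {a b : G} (ha : a ∈ H) (hb : b ∈ H) (g : G) :
    H ⊔ zpowers (a * g * b) = H ⊔ zpowers g := by
  have mem_left {x : G} (hx : x ∈ H) (y : G) : x ∈ H ⊔ zpowers y := mem_sup_left hx
  have mem_right (y : G) : y ∈ H ⊔ zpowers y := mem_sup_right (mem_zpowers y)
  apply le_antisymm <;> refine sup_le le_sup_left (zpowers_le.mpr ?_)
  · exact mul_mem (mul_mem (mem_left ha g) (mem_right g)) (mem_left hb g)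
  · have := mul_mem (mul_mem (mem_left (inv_mem ha) _) (mem_right (a * g * b)))
      (mem_left (inv_mem hb) _)
    simpa [mul_assoc] using this

theorem eq_one_of_isOfFinOrder_of_mem_zpowers {t x : G} (ht : ¬IsOfFinOrder t)
    (hxt : x ∈ zpowers t) (hx : IsOfFinOrder x) : x = 1 := by
  obtain ⟨m, rfl⟩ := mem_zpowers_iff.mp hxt
  obtain ⟨n, hn, hpow⟩ := isOfFinOrder_iff_zpow_eq_one.mp hx
  rw [← zpow_mul] at hpow
  have hm : m = 0 := by
    by_contra hm
    exact ht (isOfFinOrder_iff_zpow_eq_one.mpr ⟨m * n, mul_ne_zero hm hn, hpow⟩)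
  rw [hm, zpow_zero]

theorem zmod_mem_zpowers_ofAdd_one {n : ℕ} (x : Multiplicative (ZMod n)) :
    x ∈ zpowers (Multiplicative.ofAdd (1 : ZMod n)) := by
  obtain ⟨m, hm⟩ := ZMod.intCast_surjective x.toAdd
  exact ⟨m, by simp [← ofAdd_zsmul, hm]⟩

theorem exists_cyclic_groups_orderOf_eq {ι : Type*} (n : ι → ℕ) :
    ∃ (G : ι → Type) (_ : ∀ i, Group (G i)) (t : ∀ i, G i),
      (∀ i x, x ∈ zpowers (t i)) ∧ ∀ i, orderOf (t i) = n i :=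
  ⟨fun i => Multiplicative (ZMod (n i)), inferInstance, fun _ => .ofAdd 1,
    fun _ => zmod_mem_zpowers_ofAdd_one, fun i => ZMod.addOrderOf_one (n i)⟩

theorem exists_eq_pow_lt_orderOf {t x : G} (ht : IsOfFinOrder t) (hx : x ∈ zpowers t) :
    ∃ n < orderOf t, x = t ^ n := by
  classical
  simpa [eq_comm] using ht.mem_zpowers_iff_mem_range_orderOf.mp hx

theorem coprime_of_orderOf_pow_eq {M : Type*} [Monoid M] {t : M} (ht : IsOfFinOrder t) {n : ℕ}
    (h : orderOf (t ^ n) = orderOf t) : n.Coprime (orderOf t) := by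
  rw [ht.orderOf_pow, Nat.div_eq_self] at h
  exact Nat.coprime_comm.mp (h.resolve_left ht.orderOf_pos.ne')

end Cyclic

section Words

open Monoid Monoid.CoprodI

variable {ι : Type*} {M G : ι → Type*} [∀ i, Monoid (M i)] [∀ i, Group (G i)]

theorem toList_eq_of_neWord_prod_eq {i j k l : ι} {w : NeWord M i j} {w' : NeWord M k l}
    (h : w.prod = w'.prod) : w.toList = w'.toList := by
  classical
  exact congrArg Word.toList (Word.equiv.symm.injective h : w.toWord = w'.toWord)

theorem neWord_prod_ne_one {i j : ι} (w : NeWord M i j) : w.prod ≠ 1 := by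
  classical
  intro h
  have : w.toWord = Word.empty := Word.equiv.symm.injective (h.trans Word.prod_empty.symm)
  exact w.toList_ne_nil (congrArg Word.toList this)

theorem exists_neWord_prod_eq {g : CoprodI M} (hg : g ≠ 1) :
    ∃ (i j : ι) (w : NeWord M i j), w.prod = g := by
  classical
  have hne : Word.equiv g ≠ Word.empty := fun h => hg <| by
    rw [← Word.equiv.symm_apply_apply g, h]
    exact Word.prod_empty
  obtain ⟨i, j, w, hw⟩ := NeWord.of_word _ hne
  exact ⟨i, j, w, (congrArg Word.prod hw).trans (Word.equiv.symm_apply_apply g)⟩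

theorem neWord_prod_eq_of_or_eq_of_mul {i j : ι} (w : NeWord M i j) :
    (i = j ∧ ∃ a : M i, a ≠ 1 ∧ w.prod = of a ∧ w.toList.length = 1) ∨
      ∃ a : M i, a ≠ 1 ∧ ∃ k ≠ i, ∃ w' : NeWord M k j,
        w.prod = of a * w'.prod ∧ w.toList.length = w'.toList.length + 1 := by
  induction w with
  | singleton a ha => exact .inl ⟨rfl, a, ha, by simp⟩
  | append w₁ hne w₂ ih₁ _ =>
    right
    rcases ih₁ with ⟨rfl, a, ha, hprod, hlen⟩ | ⟨a, ha, k, hk, w', hprod, hlen⟩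
    · exact ⟨a, ha, _, hne.symm, w₂, by simp [hprod], by simp [hlen, add_comm]⟩
    · exact ⟨a, ha, k, hk, .append w' hne w₂, by simp [hprod, mul_assoc], by simp [hlen]; omega⟩

theorem length_toList_neWord_inv {i j : ι} (w : NeWord G i j) :
    w.inv.toList.length = w.toList.length := by
  induction w with
  | singleton => rfl
  | append _ _ _ ih₁ ih₂ => simp [NeWord.inv, ih₁, ih₂, add_comm]

theorem neWord_prod_eq_of_or_eq_mul_of {i j : ι} (w : NeWord G i j) :
    (i = j ∧ ∃ b : G j, b ≠ 1 ∧ w.prod = of b ∧ w.toList.length = 1) ∨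
      ∃ b : G j, b ≠ 1 ∧ ∃ k ≠ j, ∃ w' : NeWord G i k,
        w.prod = w'.prod * of b ∧ w.toList.length = w'.toList.length + 1 := by
  rw [← length_toList_neWord_inv w, ← inv_inv w.prod, ← NeWord.inv_prod]
  rcases neWord_prod_eq_of_or_eq_of_mul w.inv with
    ⟨rfl, b, hb, hprod, hlen⟩ | ⟨b, hb, k, hk, w', hprod, hlen⟩
  · exact .inl ⟨rfl, b⁻¹, inv_ne_one.mpr hb, by simp [hprod], hlen⟩
  · exact .inr ⟨b⁻¹, inv_ne_one.mpr hb, k, hk, w'.inv, by simp [hprod],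
      by rw [hlen, length_toList_neWord_inv]⟩

theorem neWord_prod_eq_of_or_eq_of_mul_mul_of {i : ι} (w : NeWord G i i) :
    (∃ a : G i, a ≠ 1 ∧ w.prod = of a ∧ w.toList.length = 1) ∨
      ∃ a b : G i, a ≠ 1 ∧ b ≠ 1 ∧ ∃ j ≠ i, ∃ k ≠ i, ∃ w' : NeWord G j k,
        w.prod = of a * w'.prod * of b ∧ w.toList.length = w'.toList.length + 2 := by
  rcases neWord_prod_eq_of_or_eq_of_mul w with ⟨-, hw⟩ | ⟨a, ha, j, hj, v, hv, hvlen⟩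
  · exact .inl hw
  · rcases neWord_prod_eq_of_or_eq_mul_of v with ⟨hji, -⟩ | ⟨b, hb, k, hk, w', hw', hw'len⟩
    · exact absurd hji hj
    · exact .inr ⟨a, b, ha, hb, j, hj, k, hk, w', by rw [hv, hw', mul_assoc],
        by rw [hvlen, hw'len]⟩

theorem exists_neWord_prod_eq_pow_succ {i j : ι} (w : NeWord M i j) (hij : i ≠ j) (n : ℕ) :
    ∃ w' : NeWord M i j, w'.prod = w.prod ^ (n + 1) ∧ w.toList.length ≤ w'.toList.length := by
  induction n with
  | zero => exact ⟨w, by simp⟩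
  | succ n ih =>
    obtain ⟨w', hprod, -⟩ := ih
    exact ⟨.append w' hij.symm w, by simp [hprod, pow_succ], by simp⟩

theorem exists_neWord_prod_eq_pow_mul {i j k : ι} (w : NeWord M i j) {c : M k} (hc : c ≠ 1)
    (hki : k ≠ i) (hkj : k ≠ j) (n : ℕ) :
    ∃ w' : NeWord M i j, w'.prod = (w.prod * of c) ^ n * w.prod ∧
      w.toList.length ≤ w'.toList.length := by
  induction n with
  | zero => exact ⟨w, by simp⟩
  | succ n ih =>
    obtain ⟨w', hprod, -⟩ := ih
    exact ⟨.append (.append w hkj.symm (.singleton c hc)) hki w',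
      by simp [hprod, pow_succ', mul_assoc], by simp⟩

theorem exists_neWord_prod_eq_of_mul_mul_of {i j k : ι} {a b : M i} (ha : a ≠ 1) (hb : b ≠ 1)
    (hij : i ≠ j) (hki : k ≠ i) (w : NeWord M j k) :
    ∃ w' : NeWord M i i, w'.prod = of a * w.prod * of b ∧
      w'.toList.length = w.toList.length + 2 :=
  ⟨.append (.append (.singleton a ha) hij w) hki (.singleton b hb), by simp, by simp⟩

theorem exists_neWord_prod_eq_of_mul_mul_of_pow_succ {i j k : ι} {a b : G i} (ha : a ≠ 1)
    (hb : b ≠ 1) (hba : b * a ≠ 1) (hij : i ≠ j) (hki : k ≠ i) (w : NeWord G j k) (n : ℕ) :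
    ∃ w' : NeWord G i i, w'.prod = (of a * w.prod * of b) ^ (n + 1) ∧
      w.toList.length + 2 ≤ w'.toList.length := by
  obtain ⟨v, hv, hlen⟩ := exists_neWord_prod_eq_pow_mul w hba hij hki.symm n
  obtain ⟨w', hw', hlen'⟩ := exists_neWord_prod_eq_of_mul_mul_of ha hb hij hki v
  refine ⟨w', ?_, by omega⟩
  have hconj : of a * w.prod * of b = of a * (w.prod * of (b * a)) * (of a)⁻¹ := by
    rw [map_mul]; group
  rw [hw', hv, hconj, conj_pow, pow_succ, map_mul]
  group

theorem neWord_prod_eq_conj_or_exists_neWord_prod_eq_pow {i j : ι} (w : NeWord G i j) :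
    (∃ (g : CoprodI G) (k : ι) (x : G k), IsOfFinOrder x ∧ w.prod = g * of x * g⁻¹) ∨
      ∀ n ≠ 0, ∃ w' : NeWord G i j, w'.prod = w.prod ^ n ∧ w.toList.length ≤ w'.toList.length := by
  induction hlen : w.toList.length using Nat.strong_induction_on generalizing i j with
  | _ N ih =>
  subst hlen
  by_cases hij : i = j
  case neg =>
    refine .inr fun n hn => ?_
    obtain ⟨n, rfl⟩ := Nat.exists_eq_succ_of_ne_zero hn
    exact exists_neWord_prod_eq_pow_succ w hij n
  subst hij
  rcases neWord_prod_eq_of_or_eq_of_mul_mul_of w with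
    ⟨a, -, hw, hlen⟩ | ⟨a, b, ha, hb, j, hj, k, hk, v, hw, hlen⟩
  · by_cases hfin : IsOfFinOrder a
    · exact .inl ⟨1, i, a, hfin, by simp [hw]⟩
    · refine .inr fun n hn => ⟨.singleton (a ^ n) fun h => hfin ?_, by simp [hw], by simp [hlen]⟩
      exact isOfFinOrder_iff_pow_eq_one.mpr ⟨n, Nat.pos_of_ne_zero hn, h⟩
  -- If `b * a = 1`, then `w` is conjugate to the shorter `v`; otherwise its powers do not cancel.
  by_cases hba : b * a = 1
  · have hconj : w.prod = of a * v.prod * (of a)⁻¹ := by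
      rw [hw, eq_inv_of_mul_eq_one_left hba, map_inv]
    rcases ih _ (by omega) v rfl with ⟨g, l, x, hx, hv⟩ | hv
    · exact .inl ⟨of a * g, l, x, hx, by rw [hconj, hv]; group⟩
    · refine .inr fun n hn => ?_
      obtain ⟨v', hv', hlen'⟩ := hv n hn
      obtain ⟨w', hw', hlen''⟩ := exists_neWord_prod_eq_of_mul_mul_of ha hb hj.symm hk v'
      refine ⟨w', ?_, by omega⟩
      rw [hw', hv', hconj, conj_pow, eq_inv_of_mul_eq_one_left hba, map_inv]
  · refine .inr fun n hn => ?_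
    obtain ⟨n, rfl⟩ := Nat.exists_eq_succ_of_ne_zero hn
    obtain ⟨w', hw', hlen'⟩ := exists_neWord_prod_eq_of_mul_mul_of_pow_succ ha hb hba hj.symm hk v n
    exact ⟨w', by rw [hw', hw], by omega⟩

theorem exists_eq_conj_of_of_isOfFinOrder [Nonempty ι] {g : CoprodI G} (hg : IsOfFinOrder g) :
    ∃ (h : CoprodI G) (i : ι) (x : G i), IsOfFinOrder x ∧ g = h * of x * h⁻¹ := by
  by_cases hg1 : g = 1
  · exact ⟨1, Classical.arbitrary ι, 1, .one, by simp [hg1]⟩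
  obtain ⟨i, j, w, rfl⟩ := exists_neWord_prod_eq hg1
  refine (neWord_prod_eq_conj_or_exists_neWord_prod_eq_pow w).resolve_right fun hpow => ?_
  obtain ⟨n, hn, hpow_eq⟩ := isOfFinOrder_iff_pow_eq_one.mp hg
  obtain ⟨w', hw', -⟩ := hpow n hn.ne'
  exact neWord_prod_ne_one w' (hw'.trans hpow_eq)

theorem exists_neWord_prod_eq_zpow {i : ι} {w : NeWord G i i} (hw : ¬IsOfFinOrder w.prod) {n : ℤ}
    (hn : n ≠ 0) :
    ∃ w' : NeWord G i i, w'.prod = w.prod ^ n ∧ w.toList.length ≤ w'.toList.length := by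
  have hpow := (neWord_prod_eq_conj_or_exists_neWord_prod_eq_pow w).resolve_left <| by
    rintro ⟨g, k, x, hx, hconj⟩
    exact hw ((isConj_iff.mpr ⟨g, hconj.symm⟩).isOfFinOrder (of.isOfFinOrder hx))
  obtain ⟨m, rfl | rfl⟩ := n.eq_nat_or_neg
  · simpa only [zpow_natCast] using hpow m (by simpa using hn)
  · obtain ⟨w', hw', hlen⟩ := hpow m (by simpa using hn)
    exact ⟨w'.inv, by simp [hw'], by rwa [length_toList_neWord_inv]⟩

theorem exists_neWord_prod_eq_lift {H : ι → Type*} [∀ i, Monoid (H i)]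
    {f : ∀ i, H i →* CoprodI M} {N : ι → ℕ}
    (hf : ∀ i, ∀ x : H i, x ≠ 1 →
      ∃ w : NeWord M i i, w.prod = f i x ∧ N i ≤ w.toList.length)
    {i j : ι} (w : NeWord H i j) :
    ∃ w' : NeWord M i j, w'.prod = lift f w.prod ∧ N i ≤ w'.toList.length := by
  induction w with
  | singleton x hx => simpa using hf _ x hx
  | append w₁ hne w₂ ih₁ ih₂ =>
    obtain ⟨w₁', hprod₁, hlen₁⟩ := ih₁
    obtain ⟨w₂', hprod₂, -⟩ := ih₂
    exact ⟨.append w₁' hne w₂', by simp [hprod₁, hprod₂],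
      by simpa using hlen₁.trans (Nat.le_add_right _ _)⟩

theorem le_one_of_of_mem_iSup {H : ι → Subgroup (CoprodI G)} {N : ι → ℕ}
    (hH : ∀ i, ∀ h ∈ H i, h ≠ 1 → ∃ w : NeWord G i i, w.prod = h ∧ N i ≤ w.toList.length)
    {i : ι} {x : G i} (hx : x ≠ 1) (hmem : of x ∈ ⨆ i, H i) : N i ≤ 1 := by
  have hrange : of x ∈ (lift fun i => (H i).subtype).range := by
    simpa only [range_eq_iSup, Subgroup.range_subtype] using hmem
  obtain ⟨g, hg⟩ := hrange
  have hof : of x ≠ 1 := fun h => hx (of_injective i (h.trans (map_one _).symm))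
  obtain ⟨k, l, w, rfl⟩ := exists_neWord_prod_eq (g := g) <| by
    rintro rfl
    exact hof (by simp [← hg])
  obtain ⟨w', hw', hlen⟩ := exists_neWord_prod_eq_lift (f := fun i => (H i).subtype) (N := N)
    (fun i h hh => hH i h h.2 (by simpa using hh)) w
  have hlist : w'.toList = [⟨i, x⟩] :=
    toList_eq_of_neWord_prod_eq (w' := .singleton x hx) (by rw [hw', hg, NeWord.prod_singleton])
  obtain ⟨rfl, -⟩ : k = i ∧ w'.head ≍ x := by simpa [hlist] using w'.toList_head?.symm
  simpa [hlist] using hlen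

theorem length_toList_le_one_of_of_mem_zpowers_sup {i : ι} {w : NeWord G i i}
    (hw : ¬IsOfFinOrder w.prod) {x : G i} (hx : x ≠ 1)
    (hmem : of x ∈ Subgroup.zpowers w.prod ⊔ ⨆ j ≠ i, (of : G j →* CoprodI G).range) :
    w.toList.length ≤ 1 := by
  classical
  let H : ι → Subgroup (CoprodI G) :=
    Function.update (fun j => (of : G j →* CoprodI G).range) i (Subgroup.zpowers w.prod)
  let N : ι → ℕ := Function.update 0 i w.toList.length
  have hH (j : ι) (h : CoprodI G) (hh : h ∈ H j) (h1 : h ≠ 1) :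
      ∃ v : NeWord G j j, v.prod = h ∧ N j ≤ v.toList.length := by
    rcases eq_or_ne j i with rfl | hji
    · obtain ⟨n, rfl⟩ : ∃ n : ℤ, w.prod ^ n = h := by
        simpa [H, Subgroup.mem_zpowers_iff] using hh
      simpa [N] using exists_neWord_prod_eq_zpow hw (n := n) (by rintro rfl; exact h1 (zpow_zero _))
    · obtain ⟨y, rfl⟩ : ∃ y : G j, of y = h := by simpa [H, hji] using hh
      exact ⟨.singleton y (by rintro rfl; exact h1 (map_one _)), by simp, by simp [N, hji]⟩
  have hle : Subgroup.zpowers w.prod ⊔ ⨆ j ≠ i, (of : G j →* CoprodI G).range ≤ ⨆ j, H j := by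
    refine sup_le (le_iSup_of_le i (by simp [H])) (iSup₂_le fun j hj => ?_)
    exact le_iSup_of_le j (by simp [H, hj])
  simpa [N] using le_one_of_of_mem_iSup hH hx (hle hmem)

theorem iSup_zpowers_map_of_eq_top {H : Type*} [Group H] {t : ∀ i, G i}
    (ht : ∀ i x, x ∈ Subgroup.zpowers (t i)) {f : CoprodI G →* H} (hf : Function.Surjective f) :
    ⨆ i, Subgroup.zpowers (f (of (t i))) = ⊤ := by
  rw [eq_top_iff, ← MonoidHom.range_eq_top.mpr hf, ← lift_comp_of' f, range_eq_iSup]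
  refine iSup_mono fun i => ?_
  rintro _ ⟨x, rfl⟩
  obtain ⟨n, rfl⟩ := Subgroup.mem_zpowers_iff.mp (ht i x)
  exact ⟨n, by simp⟩

end Words

section TwoFactors

open Monoid Monoid.CoprodI Subgroup

variable {G : Fin 2 → Type*} [∀ i, Group (G i)]

theorem eq_of_or_exists_eq_of_mul_neWord_prod_mul_of (g : CoprodI G) :
    (∃ a : G 0, g = of a) ∨
      ∃ (a b : G 0) (w : NeWord G 1 1), g = of a * w.prod * of b := by
  by_cases hg : g = 1
  · exact .inl ⟨1, by simp [hg]⟩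
  obtain ⟨i, j, w, rfl⟩ := exists_neWord_prod_eq hg
  fin_cases i <;> fin_cases j
  · rcases neWord_prod_eq_of_or_eq_of_mul_mul_of w with
      ⟨a, -, hw, -⟩ | ⟨a, b, -, -, j, hj, k, hk, v, hw, -⟩
    · exact .inl ⟨a, hw⟩
    · obtain rfl := Fin.eq_one_of_ne_zero j hj
      obtain rfl := Fin.eq_one_of_ne_zero k hk
      exact .inr ⟨a, b, v, hw⟩
  · obtain ⟨h, -⟩ | ⟨a, -, k, hk, v, hw, -⟩ := neWord_prod_eq_of_or_eq_of_mul w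
    · exact absurd h zero_ne_one
    · obtain rfl := Fin.eq_one_of_ne_zero k hk
      exact .inr ⟨a, 1, v, by simpa using hw⟩
  · obtain ⟨h, -⟩ | ⟨b, -, k, hk, v, hw, -⟩ := neWord_prod_eq_of_or_eq_mul_of w
    · exact absurd h one_ne_zero
    · obtain rfl := Fin.eq_one_of_ne_zero k hk
      exact .inr ⟨1, b, v, by simpa using hw⟩
  · exact .inr ⟨1, 1, w, by simp⟩

theorem exists_generator_of_range_of_sup_zpowers_eq_top [Infinite (G 1)] {w : CoprodI G}
    (hw : (of : G 0 →* CoprodI G).range ⊔ zpowers w = ⊤) :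
    ∃ (a b : G 0) (y : G 1), zpowers y = ⊤ ∧ w = of a * of y * of b := by
  let π : CoprodI G →* G 1 := lift (Pi.mulSingle 1 (MonoidHom.id (G 1)))
  have hπ₀ (a : G 0) : π (of a) = 1 := by simp [π]
  have hπ₁ (y : G 1) : π (of y) = y := by simp [π]
  have hπw : zpowers (π w) = ⊤ := by
    have hker : (of : G 0 →* CoprodI G).range ≤ π.ker := by rintro _ ⟨a, rfl⟩; exact hπ₀ a
    rw [← map_top_of_surjective π fun y => ⟨of y, hπ₁ y⟩, ← hw, Subgroup.map_sup,
      (Subgroup.map_eq_bot_iff _).mpr hker, bot_sup_eq, MonoidHom.map_zpowers]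
  have hinf : ¬IsOfFinOrder (π w) := by
    rw [← finite_zpowers, hπw]
    exact Set.infinite_univ
  rcases eq_of_or_exists_eq_of_mul_neWord_prod_mul_of w with ⟨a, rfl⟩ | ⟨a, b, h, rfl⟩
  · exact absurd (by simp [hπ₀]) hinf
  have hπh : π (of a * h.prod * of b) = π h.prod := by simp [hπ₀]
  rw [hπh] at hπw hinf
  rw [sup_zpowers_mul_mul (H := (of : G 0 →* CoprodI G).range) ⟨a, rfl⟩ ⟨b, rfl⟩] at hw
  obtain ⟨x, hx⟩ := exists_ne (1 : G 1)
  have hlen : h.toList.length ≤ 1 := by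
    refine length_toList_le_one_of_of_mem_zpowers_sup (fun hfin => hinf (π.isOfFinOrder hfin)) hx ?_
    have hle : (of : G 0 →* CoprodI G).range ⊔ zpowers h.prod ≤
        zpowers h.prod ⊔ ⨆ j ≠ 1, (of : G j →* CoprodI G).range :=
      sup_le (le_sup_of_le_right (le_iSup₂_of_le 0 zero_ne_one le_rfl)) le_sup_left
    exact hle (hw ▸ mem_top _)
  rcases neWord_prod_eq_of_or_eq_of_mul_mul_of h with
    ⟨y, -, hy, -⟩ | ⟨_, _, -, -, _, -, _, -, _, -, hlen'⟩
  · exact ⟨a, b, y, by rw [← hπw, hy, hπ₁], by rw [hy]⟩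
  · omega

theorem exists_eq_conj_of_zero_of_isOfFinOrder {t : G 1} (ht : ∀ y, y ∈ zpowers t)
    (hinf : ¬IsOfFinOrder t) {g : CoprodI G} (hg : IsOfFinOrder g) :
    ∃ (h : CoprodI G) (x : G 0), g = h * of x * h⁻¹ := by
  obtain ⟨h, i, x, hx, rfl⟩ := exists_eq_conj_of_of_isOfFinOrder hg
  fin_cases i
  · exact ⟨h, x, rfl⟩
  · have hx1 : x = 1 := eq_one_of_isOfFinOrder_of_mem_zpowers hinf (ht x) hx
    exact ⟨h, 1, by simp [hx1]⟩

theorem exists_eq_conj_of_mulEquiv {t : ∀ i, G i} (ht : ∀ i y, y ∈ zpowers (t i))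
    (hfin : IsOfFinOrder (t 0)) (hinf : ¬IsOfFinOrder (t 1)) (φ : CoprodI G ≃* CoprodI G) :
    ∃ (ε : ℤ) (g : CoprodI G) (x c : G 0), (ε = 1 ∨ ε = -1) ∧ orderOf x = orderOf (t 0) ∧
      φ (of (t 0)) = g * of x * g⁻¹ ∧ φ (of (t 1)) = g * (of (t 1) ^ ε * of c) * g⁻¹ := by
  have : Infinite (G 1) := not_finite_iff_infinite.mp fun _ => hinf (isOfFinOrder_of_finite _)
  have hφfin : IsOfFinOrder (φ (of (t 0))) := φ.toMonoidHom.isOfFinOrder (of.isOfFinOrder hfin)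
  obtain ⟨p, x, hx⟩ := exists_eq_conj_of_zero_of_isOfFinOrder (ht 1) hinf hφfin
  let ψ : CoprodI G ≃* CoprodI G := φ.trans (MulAut.conj p⁻¹)
  have hφ (g : CoprodI G) : φ g = p * ψ g * p⁻¹ := by simp [ψ, mul_assoc]
  have hψ₀ : ψ (of (t 0)) = of x := by simp [ψ, hx, mul_assoc]
  have htop : (of : G 0 →* CoprodI G).range ⊔ zpowers (ψ (of (t 1))) = ⊤ := by
    rw [eq_top_iff, ← iSup_zpowers_map_of_eq_top ht (f := ψ.toMonoidHom) ψ.surjective]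
    refine iSup_le fun i => zpowers_le.mpr ?_
    fin_cases i
    · exact mem_sup_left ⟨x, hψ₀.symm⟩
    · exact mem_sup_right (mem_zpowers _)
  obtain ⟨a, b, y, hy, hψ₁⟩ := exists_generator_of_range_of_sup_zpowers_eq_top htop
  obtain ⟨ε, hε, rfl⟩ : ∃ ε : ℤ, (ε = 1 ∨ ε = -1) ∧ t 1 ^ ε = y := by
    have : zpowers (t 1) = zpowers y := by rw [hy, (eq_top_iff' _).mpr (ht 1)]
    rcases (zpowers_eq_zpowers_iff hinf).mp this with h | h
    · exact ⟨1, .inl rfl, by simpa using h⟩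
    · exact ⟨-1, .inr rfl, by simpa using h⟩
  refine ⟨ε, p * of a, a⁻¹ * x * a, b * a, hε, ?_, ?_, ?_⟩
  · calc orderOf (a⁻¹ * x * a) = orderOf x := by simpa using (MulAut.conj a⁻¹).orderOf_eq x
      _ = orderOf (ψ (of (t 0))) := by rw [hψ₀, orderOf_injective _ (of_injective 0)]
      _ = orderOf (t 0) := by rw [ψ.orderOf_eq, orderOf_injective _ (of_injective 0)]
  · simp [hφ, hψ₀, mul_assoc]
  · simp [hφ, hψ₁, mul_assoc]

end TwoFactors

section Presentation

open Monoid

variable {k : ℕ} {G : Fin 2 → Type*} [∀ i, Group (G i)]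

theorem exists_presentedGroup_mulEquiv_coprodI {t : ∀ i, G i}
    (ht : ∀ i x, x ∈ Subgroup.zpowers (t i)) (h₀ : orderOf (t 0) = k) (h₁ : orderOf (t 1) = 0) :
    ∃ e : PresentedGroup (relCkZ k) ≃* CoprodI G,
      ∀ i, e (.of i) = CoprodI.of (t i) := by
  have hrel : ∀ r ∈ relCkZ k, FreeGroup.lift (fun i => (CoprodI.of (t i) : CoprodI G)) r = 1 := by
    rintro _ rfl
    rw [map_pow, FreeGroup.lift_apply_of, ← map_pow, ← h₀, pow_orderOf_eq_one, map_one]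
  have hdvd (i : Fin 2) : orderOf (.of i : PresentedGroup (relCkZ k)) ∣ orderOf (t i) := by
    fin_cases i
    · exact h₀ ▸ orderOf_dvd_of_pow_eq_one (PresentedGroup.one_of_mem rfl)
    · exact h₁ ▸ dvd_zero _
  let f : PresentedGroup (relCkZ k) →* CoprodI G := PresentedGroup.toGroup hrel
  let g : CoprodI G →* PresentedGroup (relCkZ k) :=
    CoprodI.lift fun i => monoidHomOfForallMemZpowers (ht i) (hdvd i)
  have hf (i : Fin 2) : f (.of i) = CoprodI.of (t i) := PresentedGroup.toGroup.of hrel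
  have hg (i : Fin 2) : g (CoprodI.of (t i)) = .of i := by
    rw [CoprodI.lift_of, monoidHomOfForallMemZpowers_apply_gen]
  refine ⟨f.toMulEquiv g (PresentedGroup.ext fun i => ?_) (CoprodI.ext_hom _ _ fun i => ?_), hf⟩
  · simp [hf, hg]
  · exact (MonoidHom.eq_iff_eq_on_generator (ht i) _ _).mpr (by simp [hf, hg])

end Presentation

/-- every automorphism `φ` of `C_k ⋆ ℤ` (`k ≥ 2`) equals `ν_{ε,r,s} ∘ ι_g`
for some `g`, `ε ∈ {1,-1}`, and `r, s ∈ {0, …, k-1}` with `r` coprime to `k`;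
equivalently, on the generators, `φ u = g uʳ g⁻¹` and `φ v = g (vᵉ uˢ) g⁻¹`. -/
theorem stmt3 (k : ℕ) (hk : 2 ≤ k)
    (φ : PresentedGroup (relCkZ k) ≃* PresentedGroup (relCkZ k)) :
    ∃ (ε : ℤ) (r s : ℕ) (g : PresentedGroup (relCkZ k)),
      (ε = 1 ∨ ε = -1) ∧ r < k ∧ s < k ∧ Nat.Coprime r k ∧
      φ (PresentedGroup.of 0) = g * (PresentedGroup.of 0) ^ r * g⁻¹ ∧
      φ (PresentedGroup.of 1) =
        g * ((PresentedGroup.of 1) ^ ε * (PresentedGroup.of 0) ^ s) * g⁻¹ := by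
  obtain ⟨G, _, t, ht, hord⟩ := exists_cyclic_groups_orderOf_eq ![k, 0]
  have ht₀ : orderOf (t 0) = k := hord 0
  have ht₁ : orderOf (t 1) = 0 := hord 1
  have hfin : IsOfFinOrder (t 0) := orderOf_pos_iff.mp (by omega)
  obtain ⟨e, he⟩ := exists_presentedGroup_mulEquiv_coprodI ht ht₀ ht₁
  have he_symm (i) : e.symm (.of (t i)) = .of i := e.symm_apply_eq.mpr (he i).symm
  obtain ⟨ε, g, x, c, hε, hx, h₀, h₁⟩ :=
    exists_eq_conj_of_mulEquiv ht hfin (orderOf_eq_zero_iff.mp ht₁) (e.symm.trans (φ.trans e))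
  obtain ⟨r, hr, rfl⟩ := exists_eq_pow_lt_orderOf hfin (ht 0 x)
  obtain ⟨s, hs, rfl⟩ := exists_eq_pow_lt_orderOf hfin (ht 0 c)
  refine ⟨ε, r, s, e.symm g, hε, ht₀ ▸ hr, ht₀ ▸ hs, ht₀ ▸ coprime_of_orderOf_pow_eq hfin hx,
    e.injective ?_, e.injective ?_⟩
  · simpa [he, he_symm] using h₀
  · simpa [he, he_symm] using h₁
end

section
/- Let A be the Artin group of rank 2 with presentation ⟨α, β | w(α,β:m) = w(β,α:m)⟩ where m ≥ 4 is even. Then Out(A) is infinite and isomorphic to (ℤ ⋊ C₂) × C₂, where C₂ acts on ℤ by inversion. -/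
/-- The alternating word `x y x y ⋯` of length `m`. -/
def altWord : ℕ → FreeGroup (Fin 2) → FreeGroup (Fin 2) → FreeGroup (Fin 2)
  | 0, _, _ => 1
  | n + 1, x, y => x * altWord n y x

/-- Relator for the rank-2 Artin group `⟨α, β | w(α,β:m) = w(β,α:m)⟩`. -/
def dihedralArtinRel (m : ℕ) : Set (FreeGroup (Fin 2)) :=
  {altWord m (FreeGroup.of 0) (FreeGroup.of 1) *
    (altWord m (FreeGroup.of 1) (FreeGroup.of 0))⁻¹}

/-!
Put `s = α` and `t = αβ`: the relation becomes `s tᵏ = tᵏ s` with `m = 2k`, so `tᵏ` is central and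
`A / ⟨tᵏ⟩` is the free product `ℤ * ℤ/k`. Two facts about reduced words in a free product determine
the automorphisms of `A`.

An element of finite order is conjugate into a factor. As `tᵏ` is central, an automorphism
therefore sends `t` to a conjugate of a power of `t`.

The nontrivial powers of a word that begins and ends in the factor `ℤ` again begin and end there, so
no cancellation occurs between them and letters from `ℤ/k`. Hence, if such an element `x` generates
the free product together with `ℤ/k`, the generator of `ℤ` is already a power of `x`. Consequently
an automorphism fixing `t` sends `s` to `tⁱ s^{±1} tʲ`.

So an automorphism acting trivially on the abelianization `ℤs ⊕ ℤt` is inner, and `Out(A)` is the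
group of the maps `s ↦ ±s + nt`, `t ↦ ±t`. It is the product of `{±1}` and of the subgroup fixing
`t`, which is infinite dihedral.
-/

/-! ### Reduced words in free products -/

namespace FreeProduct

open Monoid Monoid.CoprodI

variable {ι : Type*} {G : ι → Type*} [∀ i, Group (G i)] {i j k l : ι} {m n : ℕ}
  {x y : CoprodI G}

/-- `x` is the product of a reduced word of length `n` whose first letter comes from `G i` and
whose last letter comes from `G j`. -/
def IsReduced (i j : ι) (n : ℕ) (x : CoprodI G) : Prop :=
  ∃ w : NeWord G i j, w.prod = x ∧ w.toList.length = n

namespace IsReduced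

theorem of {a : G i} (ha : a ≠ 1) : IsReduced i i 1 (of a : CoprodI G) :=
  ⟨.singleton a ha, NeWord.prod_singleton a ha, rfl⟩

theorem mul (hx : IsReduced i j m x) (hjk : j ≠ k) (hy : IsReduced k l n y) :
    IsReduced i l (m + n) (x * y) := by
  obtain ⟨v, rfl, rfl⟩ := hx
  obtain ⟨w, rfl, rfl⟩ := hy
  exact ⟨v.append hjk w, NeWord.append_prod, List.length_append⟩

@[elab_as_elim]
theorem induction {P : ∀ i j n (x : CoprodI G), IsReduced i j n x → Prop}
    (of : ∀ {i} (a : G i) (ha : a ≠ 1), P i i 1 (CoprodI.of a) (.of ha))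
    (mul : ∀ {i j k l m n x y} (hx : IsReduced i j m x) (hjk : j ≠ k) (hy : IsReduced k l n y),
      P i j m x hx → P k l n y hy → P i l (m + n) (x * y) (hx.mul hjk hy))
    (hx : IsReduced i j n x) : P i j n x hx := by
  obtain ⟨w, rfl, rfl⟩ := hx
  induction w with
  | singleton a ha => simpa using of a ha
  | append v hjk w hv hw => simpa using mul _ hjk _ hv hw

theorem inv (hx : IsReduced i j n x) : IsReduced j i n x⁻¹ := by
  induction hx using IsReduced.induction with
  | of a ha => simpa using of (inv_ne_one.mpr ha)
  | mul _ hjk _ hx hy => simpa [add_comm] using hy.mul hjk.symm hx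

theorem length_pos (hx : IsReduced i j n x) : 0 < n := by
  obtain ⟨w, -, rfl⟩ := hx
  exact List.length_pos_iff.mpr w.toList_ne_nil

theorem ne_one (hx : IsReduced i j n x) : x ≠ 1 := by
  classical
  obtain ⟨w, rfl, -⟩ := hx
  intro h
  have : w.toWord = Word.empty := Word.equiv.symm.injective (h.trans Word.prod_empty.symm)
  exact w.toList_ne_nil (congrArg Word.toList this)

theorem unique (hx : IsReduced i j m x) (hx' : IsReduced k l n x) : i = k ∧ j = l ∧ m = n := by
  classical
  obtain ⟨v, rfl, rfl⟩ := hx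
  obtain ⟨w, hw, rfl⟩ := hx'
  have h : w.toList = v.toList := congrArg Word.toList (Word.equiv.symm.injective hw)
  have hhead := congrArg List.head? h
  have hlast := congrArg List.getLast? h
  rw [NeWord.toList_head?, NeWord.toList_head?, Option.some_inj] at hhead
  rw [NeWord.toList_getLast?, NeWord.toList_getLast?, Option.some_inj] at hlast
  exact ⟨(congrArg Sigma.fst hhead).symm, (congrArg Sigma.fst hlast).symm,
    (congrArg List.length h).symm⟩

theorem eq_of_or_eq_of_mul (hx : IsReduced i j n x) :
    (i = j ∧ n = 1 ∧ ∃ a : G i, x = CoprodI.of a) ∨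
      ∃ a : G i, a ≠ 1 ∧ ∃ k m y, k ≠ i ∧ IsReduced k j m y ∧ n = m + 1 ∧ x = CoprodI.of a * y := by
  induction hx using IsReduced.induction with
  | of a _ => exact .inl ⟨rfl, rfl, a, rfl⟩
  | mul hx hjk hy ihx _ =>
    rcases ihx with ⟨rfl, rfl, a, rfl⟩ | ⟨a, ha, k', m', z, hk', hz, rfl, rfl⟩
    · exact .inr ⟨a, ne_one_of_map hx.ne_one, _, _, _, hjk.symm, hy, add_comm _ _, rfl⟩
    · exact .inr ⟨a, ha, k', _, z * _, hk', hz.mul hjk hy, add_right_comm _ _ _, mul_assoc _ _ _⟩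

theorem eq_of_or_eq_mul_of (hx : IsReduced i j n x) :
    (i = j ∧ n = 1 ∧ ∃ a : G j, x = CoprodI.of a) ∨
      ∃ a : G j, a ≠ 1 ∧ ∃ k m y, k ≠ j ∧ IsReduced i k m y ∧ n = m + 1 ∧ x = y * CoprodI.of a := by
  rcases hx.inv.eq_of_or_eq_of_mul with ⟨h, hn, a, hxa⟩ | ⟨a, ha, k, m, y, hk, hy, hn, hxy⟩
  · exact .inl ⟨h.symm, hn, a⁻¹, by rw [map_inv, ← hxa, inv_inv]⟩
  · exact .inr ⟨a⁻¹, inv_ne_one.mpr ha, k, m, y⁻¹, hk, hy.inv, hn,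
      by rw [map_inv, ← mul_inv_rev, ← hxy, inv_inv]⟩

theorem exists_mul_pow_mul (hx : IsReduced i j m x) (hz : IsReduced k l n y) (hjk : j ≠ k)
    (hli : l ≠ i) (N : ℕ) : ∃ r, IsReduced i j r ((x * y) ^ N * x) := by
  induction N with
  | zero => exact ⟨m, by simpa using hx⟩
  | succ N ih =>
    obtain ⟨r, hr⟩ := ih
    exact ⟨_, by simpa only [pow_succ', mul_assoc] using (hx.mul hjk hz).mul hli hr⟩

theorem pow_succ_of_ne (hx : IsReduced i j n x) (hij : i ≠ j) (N : ℕ) :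
    ∃ r, IsReduced i j r (x ^ (N + 1)) := by
  induction N with
  | zero => exact ⟨n, by simpa using hx⟩
  | succ N ih =>
    obtain ⟨r, hr⟩ := ih
    exact ⟨_, by simpa only [pow_succ _ (N + 1)] using hr.mul hij.symm hx⟩

theorem of_mul_mul_of_inv {a : G i} (ha : a ≠ 1) (hx : IsReduced j k n x) (hj : j ≠ i)
    (hk : k ≠ i) : IsReduced i i (1 + n + 1) (CoprodI.of a * x * (CoprodI.of a)⁻¹) :=
  ((of ha).mul hj.symm hx).mul hk (of ha).inv

theorem of_or_conj_or_pow (hx : IsReduced i i n x) :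
    (∃ a : G i, x = CoprodI.of a) ∨
    (∃ a : G i, a ≠ 1 ∧ ∃ j m y, j ≠ i ∧ m < n ∧ IsReduced j j m y ∧
      x = CoprodI.of a * y * (CoprodI.of a)⁻¹) ∨
    ∀ N : ℕ, ∃ r, IsReduced i i r (x ^ (N + 1)) := by
  rcases hx.eq_of_or_eq_of_mul with ⟨-, -, a, rfl⟩ | ⟨a, ha, j, m, z, hj, hz, rfl, rfl⟩
  · exact .inl ⟨a, rfl⟩
  rcases hz.eq_of_or_eq_mul_of with ⟨rfl, -⟩ | ⟨b, hb, k, p, y, hk, hy, rfl, rfl⟩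
  · exact absurd rfl hj
  by_cases hba : b * a = 1
  · obtain rfl := eq_inv_of_mul_eq_one_left hba
    rw [map_inv, ← mul_assoc]
    by_cases hjk : j = k
    · subst hjk
      exact .inr (.inl ⟨a, ha, j, p, y, hj, by omega, hy, rfl⟩)
    · refine .inr (.inr fun N ↦ ?_)
      obtain ⟨r, hr⟩ := hy.pow_succ_of_ne hjk N
      exact ⟨_, by simpa only [conj_pow] using hr.of_mul_mul_of_inv ha hj hk⟩
  · refine .inr (.inr fun N ↦ ?_)
    obtain ⟨r, hr⟩ := hy.exists_mul_pow_mul (of hba) hk hj.symm N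
    have hpow : (CoprodI.of a * (y * CoprodI.of b)) ^ (N + 1) =
        CoprodI.of a * ((y * CoprodI.of (b * a)) ^ N * y) * CoprodI.of b := by
      rw [pow_succ, ← mul_assoc, mul_pow_mul]
      simp only [map_mul, mul_assoc]
    exact ⟨_, hpow ▸ ((of ha).mul hj.symm hr).mul hk (of hb)⟩

theorem pow_eq_one_or (hx : IsReduced i i n x) (N : ℕ) :
    x ^ N = 1 ∨ ∃ r, IsReduced i i r (x ^ N) := by
  induction n using Nat.strong_induction_on generalizing i x with
  | _ n ih =>
  rcases N with _ | N
  · exact .inl (pow_zero x)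
  rcases hx.of_or_conj_or_pow with ⟨a, rfl⟩ | ⟨a, ha, j, m, y, hj, hm, hy, rfl⟩ | h
  · rw [← map_pow]
    by_cases haN : a ^ (N + 1) = 1
    · exact .inl (by rw [haN, map_one])
    · exact .inr ⟨1, of haN⟩
  · rw [conj_pow]
    rcases ih m hm hy with h | ⟨r, hr⟩
    · exact .inl (by rw [h, mul_one, mul_inv_cancel])
    · exact .inr ⟨_, hr.of_mul_mul_of_inv ha hj hj⟩
  · exact .inr (h N)

theorem exists_conj_of_of_pow_eq_one (hx : IsReduced i j n x) {N : ℕ} (hN : N ≠ 0)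
    (hxN : x ^ N = 1) : ∃ h k, ∃ a : G k, x = h * CoprodI.of a * h⁻¹ := by
  obtain ⟨N, rfl⟩ := Nat.exists_eq_succ_of_ne_zero hN
  induction n using Nat.strong_induction_on generalizing i j x with
  | _ n ih =>
  by_cases hij : i = j
  · subst hij
    rcases hx.of_or_conj_or_pow with ⟨a, rfl⟩ | ⟨a, -, k, m, y, -, hm, hy, rfl⟩ | h
    · exact ⟨1, i, a, by simp⟩
    · rw [conj_pow, conj_eq_one_iff] at hxN
      obtain ⟨h, l, b, rfl⟩ := ih m hm hy hxN
      exact ⟨CoprodI.of a * h, l, b, by group⟩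
    · obtain ⟨r, hr⟩ := h N
      exact absurd hxN hr.ne_one
  · obtain ⟨r, hr⟩ := hx.pow_succ_of_ne hij N
    exact absurd hxN hr.ne_one

end IsReduced

theorem eq_one_or_isReduced (x : CoprodI G) : x = 1 ∨ ∃ i j n, IsReduced i j n x := by
  classical
  by_cases hx : Word.equiv x = Word.empty
  · exact .inl (by rw [← Word.equiv.symm_apply_apply x, hx]; rfl)
  · obtain ⟨i, j, w, hw⟩ := NeWord.of_word _ hx
    refine .inr ⟨i, j, _, w, ?_, rfl⟩
    rw [NeWord.prod, hw]
    exact Word.equiv.symm_apply_apply x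

theorem exists_conj_of_of_pow_eq_one [Nonempty ι] {N : ℕ} (hN : N ≠ 0) (hx : x ^ N = 1) :
    ∃ h i, ∃ a : G i, x = h * of a * h⁻¹ := by
  rcases eq_one_or_isReduced x with rfl | ⟨i, j, n, hr⟩
  · exact ⟨1, Classical.arbitrary ι, 1, by simp⟩
  · exact hr.exists_conj_of_of_pow_eq_one hN hx

theorem exists_of_or_eq_of_mul_mul_of (i : ι) (x : CoprodI G) :
    (∃ a : G i, x = of a) ∨ ∃ (a b : G i) (j k : ι) (n : ℕ) (y : CoprodI G),
      j ≠ i ∧ k ≠ i ∧ IsReduced j k n y ∧ x = of a * y * of b := by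
  have left : ∀ {j k n y}, IsReduced j k n y → (∃ a : G i, y = of a) ∨
      ∃ (a : G i) (l m : _) (z : CoprodI G), l ≠ i ∧ IsReduced l k m z ∧ y = of a * z := by
    intro j k n y hy
    by_cases hj : j = i
    · subst hj
      rcases hy.eq_of_or_eq_of_mul with ⟨-, -, a, rfl⟩ | ⟨a, -, l, m, z, hl, hz, -, rfl⟩
      · exact .inl ⟨a, rfl⟩
      · exact .inr ⟨a, l, m, z, hl, hz, rfl⟩
    · exact .inr ⟨1, j, n, y, hj, hy, by simp⟩
  rcases eq_one_or_isReduced x with rfl | ⟨j, k, n, hx⟩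
  · exact .inl ⟨1, (map_one _).symm⟩
  rcases left hx with hx | ⟨a, l, m, z, hl, hz, rfl⟩
  · exact .inl hx
  by_cases hk : k = i
  · subst hk
    rcases hz.eq_of_or_eq_mul_of with ⟨h, -⟩ | ⟨b, -, l', m', y, hl', hy, -, rfl⟩
    · exact absurd h hl
    · exact .inr ⟨a, b, l, l', m', y, hl, hl', hy, (mul_assoc _ _ _).symm⟩
  · exact .inr ⟨a, 1, l, k, m, z, hl, hk, hz, by simp⟩

theorem exists_eq_of_of_commute {a : G i} (ha : a ≠ 1) (h : Commute x (of a)) :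
    ∃ b : G i, x = of b := by
  rcases exists_of_or_eq_of_mul_mul_of i x with hx | ⟨b, c, j, k, n, y, hj, hk, hy, rfl⟩
  · exact hx
  have hl := (IsReduced.of (a := b⁻¹ * a * b⁻¹⁻¹) (conj_eq_one_iff.not.mpr ha)).mul hj.symm hy
  have hr := hy.mul hk (IsReduced.of (a := c * a * c⁻¹) (conj_eq_one_iff.not.mpr ha))
  have heq : (of (b⁻¹ * a * b⁻¹⁻¹) : CoprodI G) * y = y * of (c * a * c⁻¹) := by
    calc of (b⁻¹ * a * b⁻¹⁻¹) * y = of b⁻¹ * (of a * (of b * y * of c)) * of c⁻¹ := by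
          simp [mul_assoc]
      _ = of b⁻¹ * (of b * y * of c * of a) * of c⁻¹ := by rw [h.eq]
      _ = y * of (c * a * c⁻¹) := by simp [mul_assoc]
  exact absurd (hl.unique (heq ▸ hr)).1 hj.symm

theorem eq_one_of_mem_center (hij : i ≠ j) [Nontrivial (G i)] [Nontrivial (G j)]
    (hx : x ∈ Subgroup.center (CoprodI G)) : x = 1 := by
  obtain ⟨a, ha⟩ := exists_ne (1 : G i)
  obtain ⟨b, hb⟩ := exists_ne (1 : G j)
  obtain ⟨a', rfl⟩ := exists_eq_of_of_commute ha (Subgroup.mem_center_iff.mp hx _).symm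
  obtain ⟨b', h⟩ := exists_eq_of_of_commute hb (Subgroup.mem_center_iff.mp hx _).symm
  by_contra hne
  have ha' : a' ≠ 1 := fun h ↦ hne (by rw [h, map_one])
  have hb' : b' ≠ 1 := fun h' ↦ hne (by rw [h, h', map_one])
  exact hij ((IsReduced.of ha').unique (h ▸ IsReduced.of hb')).1

theorem mem_of_of_mem_iSup {K : ι → Subgroup (CoprodI G)}
    (hK : ∀ i, ∀ x ∈ K i, x = 1 ∨ ∃ n, IsReduced i i n x) {a : G i} (ha : of a ∈ ⨆ i, K i) :
    of a ∈ K i := by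
  have key : ∀ {j k n} {z : CoprodI fun i ↦ K i}, IsReduced j k n z →
      ∃ m, n ≤ m ∧ IsReduced j k m (lift (fun i ↦ (K i).subtype) z) := by
    intro j k n z hz
    induction hz using IsReduced.induction with
    | @of j b hb =>
      obtain ⟨m, hm⟩ := (hK j b b.2).resolve_left (by simpa using hb)
      exact ⟨m, hm.length_pos, by simpa using hm⟩
    | mul _ hjk _ hx hy =>
      obtain ⟨m, hm, hx⟩ := hx
      obtain ⟨m', hm', hy⟩ := hy
      exact ⟨m + m', add_le_add hm hm', by simpa using hx.mul hjk hy⟩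
  by_cases ha1 : a = 1
  · rw [ha1, map_one]
    exact one_mem _
  obtain ⟨z, hz⟩ : of a ∈ (lift (fun i ↦ (K i).subtype)).range := by
    simpa [range_eq_iSup] using ha
  rcases eq_one_or_isReduced z with rfl | ⟨j, k, n, hred⟩
  · exact absurd (hz.symm.trans (map_one _)) (IsReduced.of ha1).ne_one
  obtain ⟨m, hm, hm'⟩ := key hred
  obtain ⟨rfl, rfl, rfl⟩ := (hz ▸ hm').unique (IsReduced.of ha1)
  rcases hred.eq_of_or_eq_of_mul with ⟨-, -, b, rfl⟩ | ⟨b, -, k, m, y, -, hy, hlen, -⟩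
  · rw [← hz, lift_of]
    exact b.2
  · exact absurd hy.length_pos (by omega)

end FreeProduct

/-! ### Free products of cyclic groups -/

/-- The free product of cyclic groups of orders `c i`, with an infinite factor where `c i = 0`. -/
abbrev CyclicProd {ι : Type*} (c : ι → ℕ) : Type _ :=
  Monoid.CoprodI fun i ↦ Multiplicative (ZMod (c i))

namespace CyclicProd

open Monoid Multiplicative

variable {ι : Type*} {c : ι → ℕ} {H : Type*} [Group H]

/-- The generator of the `i`-th factor. -/
def gen (c : ι → ℕ) (i : ι) : CyclicProd c :=
  CoprodI.of (i := i) (ofAdd 1)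

theorem of_ofAdd_intCast (i : ι) (n : ℤ) :
    (CoprodI.of (i := i) (ofAdd (n : ZMod (c i))) : CyclicProd c) = gen c i ^ n := by
  rw [gen, ← map_zpow, ← ofAdd_zsmul, zsmul_one]

theorem exists_of_eq_gen_zpow {i : ι} (a : Multiplicative (ZMod (c i))) :
    ∃ n : ℤ, (CoprodI.of a : CyclicProd c) = gen c i ^ n := by
  obtain ⟨n, hn⟩ := ZMod.intCast_surjective a.toAdd
  exact ⟨n, by rw [← of_ofAdd_intCast, hn, ofAdd_toAdd]⟩

theorem gen_pow (i : ι) : gen c i ^ c i = 1 := by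
  rw [← zpow_natCast, ← of_ofAdd_intCast, Int.cast_natCast, ZMod.natCast_self, ofAdd_zero, map_one]

/-- The universal property: a family `x` with `x i ^ c i = 1` extends to a homomorphism. -/
def lift (x : ι → H) (hx : ∀ i, x i ^ c i = 1) : CyclicProd c →* H :=
  CoprodI.lift fun i ↦ AddMonoidHom.toMultiplicativeLeft <|
    ZMod.lift (c i) ⟨zmultiplesHom _ (Additive.ofMul (x i)), by
      rw [zmultiplesHom_apply, natCast_zsmul, ← ofMul_pow, hx, ofMul_one]⟩

@[simp]
theorem lift_gen (x : ι → H) (hx : ∀ i, x i ^ c i = 1) (i : ι) : lift x hx (gen c i) = x i := by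
  rw [← zpow_one (gen c i), ← of_ofAdd_intCast]
  simp [lift, -Int.cast_one]

end CyclicProd

/-! ### Homomorphisms to dihedral groups -/

section Dihedral

variable {H : Type*} [Group H] {n : ℕ}

/-- The homomorphism to `ℤ/n ⋊ C₂` attached to a sign character `u` and a `u`-twisted additive
function `c`. -/
def dihedralHom (u : H →* ℤˣ) (c : H → ZMod n) (hc : ∀ g h, c (g * h) = u h • c g + c h) :
    H →* DihedralGroup n :=
  .mk' (fun g ↦ if u g = 1 then .r (c g) else .sr (c g)) fun g h ↦ by
    rcases Int.units_eq_one_or (u g) with hg | hg <;>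
      rcases Int.units_eq_one_or (u h) with hh | hh <;>
      simp [hc, hg, hh, sub_eq_neg_add]

theorem dihedralHom_of_eq_one {u : H →* ℤˣ} {c : H → ZMod n}
    {hc : ∀ g h, c (g * h) = u h • c g + c h} {g : H} (hg : u g = 1) :
    dihedralHom u c hc g = .r (c g) :=
  if_pos hg

theorem dihedralHom_of_ne_one {u : H →* ℤˣ} {c : H → ZMod n}
    {hc : ∀ g h, c (g * h) = u h • c g + c h} {g : H} (hg : u g ≠ 1) :
    dihedralHom u c hc g = .sr (c g) :=
  if_neg hg

theorem dihedralHom_eq_one_iff {u : H →* ℤˣ} {c : H → ZMod n}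
    {hc : ∀ g h, c (g * h) = u h • c g + c h} {g : H} :
    dihedralHom u c hc g = 1 ↔ u g = 1 ∧ c g = 0 := by
  rw [DihedralGroup.one_def]
  by_cases hg : u g = 1
  · simp [dihedralHom_of_eq_one hg, hg, -DihedralGroup.r_zero]
  · simp [dihedralHom_of_ne_one hg, hg, -DihedralGroup.r_zero]

end Dihedral

/-! ### Even Artin groups of rank two -/

theorem altWord_add_self (k : ℕ) (x y : FreeGroup (Fin 2)) : altWord (k + k) x y = (x * y) ^ k := by
  induction k with
  | zero => rfl
  | succ k ih => rw [← add_assoc, Nat.succ_add, altWord, altWord, ih, pow_succ', mul_assoc]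

theorem mul_pow_eq_mul_pow_iff_commute {H : Type*} [Group H] (x y : H) (k : ℕ) :
    (x * y) ^ k = (y * x) ^ k ↔ Commute ((x * y) ^ k) x := by
  rw [Commute, SemiconjBy, mul_pow_mul, mul_right_inj, eq_comm]

/-- The Artin group of rank two with label `2 * k`. -/
abbrev EvenArtin (k : ℕ) : Type := PresentedGroup (dihedralArtinRel (k + k))

namespace EvenArtin

open Multiplicative Monoid FreeProduct

variable {k : ℕ} {H : Type*} [Group H]

theorem map_eq_one_of_mem_rel_iff (f : FreeGroup (Fin 2) →* H) :
    (∀ r ∈ dihedralArtinRel (k + k), f r = 1) ↔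
      Commute ((f (.of 0) * f (.of 1)) ^ k) (f (.of 0)) := by
  rw [← mul_pow_eq_mul_pow_iff_commute]
  simp [dihedralArtinRel, altWord_add_self, mul_inv_eq_one]

/-- The generator `α`; with `t = α * β` the group is `⟨s, t | s * t ^ k = t ^ k * s⟩`. -/
def s : EvenArtin k := .of 0

/-- The product `α * β` of the two standard generators. -/
def t : EvenArtin k := .of 0 * .of 1

theorem commute_t_pow_s : Commute (t ^ k) (s : EvenArtin k) :=
  (map_eq_one_of_mem_rel_iff (PresentedGroup.mk _)).mp fun _ ↦ PresentedGroup.one_of_mem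

/-- The homomorphism sending `s` to `x` and `t` to `y`. -/
def lift (x y : H) (h : Commute (y ^ k) x) : EvenArtin k →* H :=
  PresentedGroup.toGroup (f := ![x, x⁻¹ * y]) <|
    (map_eq_one_of_mem_rel_iff _).mpr (by simpa using h)

@[simp]
theorem lift_s (x y : H) (h : Commute (y ^ k) x) : lift x y h s = x :=
  PresentedGroup.toGroup.of _

@[simp]
theorem lift_t (x y : H) (h : Commute (y ^ k) x) : lift x y h t = y := by
  simp [lift, t]

theorem closure_s_t : Subgroup.closure {s, (t : EvenArtin k)} = ⊤ := by
  have hs : s ∈ Subgroup.closure {s, (t : EvenArtin k)} := Subgroup.subset_closure (by simp)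
  have ht : t ∈ Subgroup.closure {s, (t : EvenArtin k)} := Subgroup.subset_closure (by simp)
  rw [← top_le_iff, ← PresentedGroup.closure_range_of, Subgroup.closure_le, Set.range_subset_iff,
    Fin.forall_fin_two]
  exact ⟨hs, by simpa [s, t] using mul_mem (inv_mem hs) ht⟩

theorem hom_ext {f g : EvenArtin k →* H} (hs : f s = g s) (ht : f t = g t) : f = g :=
  MonoidHom.eq_of_eqOn_dense closure_s_t (by simp [Set.EqOn, hs, ht])

theorem t_pow_mem_center : t ^ k ∈ Subgroup.center (EvenArtin k) := by
  rw [← Subgroup.centralizer_univ, ← Subgroup.coe_top, ← closure_s_t, Subgroup.centralizer_closure]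
  rintro g (rfl | rfl)
  · exact commute_t_pow_s.symm
  · exact Commute.self_pow _ _

/-- The exponent sum in `s`. -/
def sExp : EvenArtin k →* Multiplicative ℤ := lift (ofAdd 1) 1 (Commute.all _ _)

/-- The exponent sum in `t`. -/
def tExp : EvenArtin k →* Multiplicative ℤ := lift 1 (ofAdd 1) (Commute.all _ _)

@[simp] theorem sExp_s : sExp (s : EvenArtin k) = ofAdd 1 := lift_s ..

@[simp] theorem sExp_t : sExp (t : EvenArtin k) = 1 := lift_t ..

@[simp] theorem tExp_s : tExp (s : EvenArtin k) = 1 := lift_s ..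

@[simp] theorem tExp_t : tExp (t : EvenArtin k) = ofAdd 1 := lift_t ..

/-- The orders of `s` (infinite, encoded as `0`) and of `t` modulo `t ^ k`, indexed by `false` and
`true` respectively. -/
def orders (k : ℕ) (b : Bool) : ℕ := bif b then k else 0

/-- The quotient `ℤ * ℤ/k` of `EvenArtin k` by the subgroup generated by `t ^ k`. -/
abbrev CentralQuotient (k : ℕ) : Type := CyclicProd (orders k)

/-- The quotient map by the subgroup generated by `t ^ k`, which is central. -/
def toCentralQuotient : EvenArtin k →* CentralQuotient k :=
  lift (.gen _ false) (.gen _ true) <|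
    CyclicProd.gen_pow (c := orders k) true ▸ Commute.one_left _

@[simp]
theorem toCentralQuotient_s : toCentralQuotient (s : EvenArtin k) = .gen _ false := lift_s ..

@[simp]
theorem toCentralQuotient_t : toCentralQuotient (t : EvenArtin k) = .gen _ true := lift_t ..

theorem toCentralQuotient_surjective :
    Function.Surjective (toCentralQuotient : EvenArtin k →* CentralQuotient k) := by
  intro x
  induction x using CoprodI.induction_on with
  | one => exact ⟨1, map_one _⟩
  | of b a =>
    obtain ⟨n, hn⟩ := CyclicProd.exists_of_eq_gen_zpow a
    cases b with
    | false => exact ⟨s ^ n, by rw [hn, map_zpow, toCentralQuotient_s]⟩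
    | true => exact ⟨t ^ n, by rw [hn, map_zpow, toCentralQuotient_t]⟩
  | mul x y hx hy =>
    obtain ⟨g, rfl⟩ := hx
    obtain ⟨h, rfl⟩ := hy
    exact ⟨g * h, map_mul _ _ _⟩

theorem exists_eq_mul_t_zpow_of_toCentralQuotient_eq {g h : EvenArtin k}
    (hgh : toCentralQuotient g = toCentralQuotient h) : ∃ n : ℤ, g = h * t ^ (k * n) := by
  have : (Subgroup.zpowers (t ^ k : EvenArtin k)).Normal :=
    ⟨fun z hz g ↦ by
      have hz' := Subgroup.zpowers_le.mpr t_pow_mem_center hz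
      rwa [Subgroup.mem_center_iff.mp hz' g, mul_inv_cancel_right]⟩
  let q := QuotientGroup.mk' (Subgroup.zpowers (t ^ k : EvenArtin k))
  have hq : q t ^ k = 1 := by
    rw [← map_pow]
    exact (QuotientGroup.eq_one_iff _).mpr (Subgroup.mem_zpowers _)
  let r : CentralQuotient k →* _ :=
    CyclicProd.lift (fun b ↦ bif b then q t else q s) (by simp [orders, hq])
  have hr : r.comp toCentralQuotient = q := hom_ext
    (by rw [MonoidHom.comp_apply, toCentralQuotient_s]; exact CyclicProd.lift_gen ..)
    (by rw [MonoidHom.comp_apply, toCentralQuotient_t]; exact CyclicProd.lift_gen ..)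
  have hgh' : q h = q g := by rw [← hr, MonoidHom.comp_apply, ← hgh, MonoidHom.comp_apply]
  obtain ⟨n, hn⟩ := QuotientGroup.eq.mp hgh'
  exact ⟨n, by rw [zpow_mul, zpow_natCast]; exact eq_mul_of_inv_mul_eq hn.symm⟩

theorem exists_eq_conj_t_zpow_of_pow_mem_center [Fact (1 < k)] {g : EvenArtin k}
    (hg : g ^ k ∈ Subgroup.center (EvenArtin k)) :
    ∃ (h : EvenArtin k) (n : ℤ), g = h * t ^ n * h⁻¹ := by
  have hk : 1 < k := Fact.out
  have hone : toCentralQuotient g ^ k = 1 := by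
    have : Nontrivial (Multiplicative (ZMod (orders k true))) :=
      inferInstanceAs (Nontrivial (Multiplicative (ZMod k)))
    have : Nontrivial (Multiplicative (ZMod (orders k false))) :=
      inferInstanceAs (Nontrivial (Multiplicative ℤ))
    refine eq_one_of_mem_center Bool.false_ne_true (Subgroup.mem_center_iff.mpr ?_)
    rw [toCentralQuotient_surjective.forall]
    intro h
    simpa only [map_mul, map_pow] using
      congrArg toCentralQuotient (Subgroup.mem_center_iff.mp hg h)
  obtain ⟨x, b, a, hx⟩ := exists_conj_of_of_pow_eq_one (by omega) hone
  obtain ⟨h, rfl⟩ := toCentralQuotient_surjective x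
  suffices ∃ n : ℤ, (CoprodI.of a : CentralQuotient k) = toCentralQuotient (t ^ n) by
    obtain ⟨n, hn⟩ := this
    obtain ⟨m, hm⟩ := exists_eq_mul_t_zpow_of_toCentralQuotient_eq (g := h⁻¹ * g * h) (h := t ^ n)
      (by simp only [map_mul, map_inv, hx, hn]; group)
    exact ⟨h, n + k * m, by rw [zpow_add, ← hm]; group⟩
  cases b with
  | true =>
    obtain ⟨n, hn⟩ := CyclicProd.exists_of_eq_gen_zpow a
    exact ⟨n, by simp [hn]⟩
  | false =>
    rw [hx, conj_pow, conj_eq_one_iff, ← map_pow, map_eq_one_iff _ (CoprodI.of_injective _)] at hone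
    have : a = 1 := (pow_eq_one_iff_left (M := Multiplicative ℤ) (by omega)).mp hone
    exact ⟨0, by simp [this]⟩

theorem sExp_ne_one_of_closure_eq_top {x : EvenArtin k} (hx : Subgroup.closure {x, t} = ⊤) :
    sExp x ≠ 1 := by
  intro h
  have hone : sExp = (1 : EvenArtin k →* Multiplicative ℤ) :=
    MonoidHom.eq_of_eqOn_dense hx (by simp [Set.EqOn, h])
  have hs : (1 : Multiplicative ℤ) = ofAdd 1 := by simpa [hone] using sExp_s (k := k)
  exact absurd hs (by decide)

theorem exists_isReduced_of_sExp_ne_one {x : EvenArtin k} (hx : sExp x ≠ 1) :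
    ∃ (i j : ℤ) (y : EvenArtin k) (n : ℕ), x = t ^ i * y * t ^ j ∧
      IsReduced false false n (toCentralQuotient y) := by
  rcases exists_of_or_eq_of_mul_mul_of true (toCentralQuotient x) with
    ⟨a, ha⟩ | ⟨a, b, c, d, n, y, hc, hd, hy, hxy⟩
  · obtain ⟨n, hn⟩ := CyclicProd.exists_of_eq_gen_zpow a
    obtain ⟨m, rfl⟩ := exists_eq_mul_t_zpow_of_toCentralQuotient_eq (g := x) (h := t ^ n)
      (by simp [ha, hn])
    simp at hx
  · obtain rfl := Bool.eq_false_iff.mpr hc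
    obtain rfl := Bool.eq_false_iff.mpr hd
    obtain ⟨i, hi⟩ := CyclicProd.exists_of_eq_gen_zpow a
    obtain ⟨j, hj⟩ := CyclicProd.exists_of_eq_gen_zpow b
    refine ⟨i, j, (t ^ i)⁻¹ * x * (t ^ j)⁻¹, n, by group, ?_⟩
    simpa [hxy, hi, hj, mul_assoc] using hy

theorem exists_toCentralQuotient_zpow_eq_s {x : EvenArtin k} {m : ℕ}
    (hx : IsReduced false false m (toCentralQuotient x)) (hcl : Subgroup.closure {x, t} = ⊤) :
    ∃ n : ℤ, toCentralQuotient (x ^ n) = toCentralQuotient s := by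
  let K (b : Bool) : Subgroup (CentralQuotient k) := bif b
    then (CoprodI.of (M := fun b ↦ Multiplicative (ZMod (orders k b))) (i := true)).range
    else Subgroup.zpowers (toCentralQuotient x)
  have hK : ∀ b, ∀ y ∈ K b, y = 1 ∨ ∃ n, IsReduced b b n y := by
    rintro (_ | _) y
    · rintro ⟨n, rfl⟩
      rcases n with n | n
      · simpa using hx.pow_eq_one_or n
      · simpa using hx.inv.pow_eq_one_or (n + 1)
    · rintro ⟨a, rfl⟩
      by_cases ha : a = 1
      · exact .inl (by rw [ha, map_one])
      · exact .inr ⟨1, .of ha⟩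
  have htop : ⨆ b, K b = ⊤ := by
    rw [← top_le_iff, ← Subgroup.map_top_of_surjective _ toCentralQuotient_surjective, ← hcl,
      MonoidHom.map_closure, Subgroup.closure_le, Set.image_pair, Set.pair_subset_iff]
    exact ⟨Subgroup.mem_iSup_of_mem false (Subgroup.mem_zpowers _),
      Subgroup.mem_iSup_of_mem true ⟨_, toCentralQuotient_t.symm⟩⟩
  obtain ⟨n, hn⟩ := mem_of_of_mem_iSup hK (i := false) (a := ofAdd 1)
    (htop ▸ Subgroup.mem_top _)
  exact ⟨n, by rw [map_zpow, toCentralQuotient_s]; exact hn⟩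

theorem exists_eq_t_zpow_mul_s_zpow_mul_t_zpow {x : EvenArtin k}
    (hx : Subgroup.closure {x, t} = ⊤) :
    ∃ (i j : ℤ) (u : ℤˣ), x = t ^ i * s ^ (u : ℤ) * t ^ j := by
  obtain ⟨i, j, y, m, rfl, hy⟩ :=
    exists_isReduced_of_sExp_ne_one (sExp_ne_one_of_closure_eq_top hx)
  have hcl : Subgroup.closure {y, t} = ⊤ := by
    have hyt : y ∈ Subgroup.closure {y, t} := Subgroup.subset_closure (by simp)
    have ht : t ∈ Subgroup.closure {y, t} := Subgroup.subset_closure (by simp)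
    rw [← top_le_iff, ← hx, Subgroup.closure_le, Set.pair_subset_iff]
    exact ⟨mul_mem (mul_mem (zpow_mem ht i) hyt) (zpow_mem ht j), ht⟩
  obtain ⟨n, hn⟩ := exists_toCentralQuotient_zpow_eq_s hy hcl
  obtain ⟨c, hc⟩ := exists_eq_mul_t_zpow_of_toCentralQuotient_eq hn
  obtain ⟨u, rfl⟩ : IsUnit n := .of_mul_eq_one (sExp y).toAdd <| by
    simpa using congrArg (fun g ↦ (sExp g).toAdd) hc
  have hcomm : Commute (s : EvenArtin k) (t ^ (k * c)) := by
    simpa only [zpow_mul, zpow_natCast] using commute_t_pow_s.symm.zpow_right c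
  have hyu : y = s ^ (u : ℤ) * t ^ (k * c * u) := by
    rw [zpow_mul t, ← hcomm.mul_zpow, ← hc, ← zpow_mul, Int.units_coe_mul_self, zpow_one]
  exact ⟨i, k * c * u + j, u, by rw [hyu, zpow_add]; group⟩

theorem exists_map_t_eq_conj_t_zpow [Fact (1 < k)] (φ : MulAut (EvenArtin k)) :
    ∃ (h : EvenArtin k) (n : ℤ), φ t = h * t ^ n * h⁻¹ := by
  refine exists_eq_conj_t_zpow_of_pow_mem_center (Subgroup.mem_center_iff.mpr ?_)
  rw [φ.surjective.forall]
  intro g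
  simpa only [map_mul, map_pow] using congrArg φ (Subgroup.mem_center_iff.mp t_pow_mem_center g)

theorem exists_eq_conj_of_map_t_eq {φ : MulAut (EvenArtin k)} (ht : φ t = t)
    (hs : sExp (φ s) = ofAdd 1) (hst : tExp (φ s) = 1) : ∃ g, φ = MulAut.conj g := by
  have hcl : Subgroup.closure {φ s, t} = ⊤ := by
    rw [← Subgroup.map_top_of_surjective φ.toMonoidHom φ.surjective, ← closure_s_t,
      MonoidHom.map_closure, Set.image_pair]
    simp [ht]
  obtain ⟨i, j, u, hu⟩ := exists_eq_t_zpow_mul_s_zpow_mul_t_zpow hcl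
  have hu1 : (u : ℤ) = 1 := by simpa [hu, ← ofAdd_zsmul] using hs
  have hij : i + j = 0 := by simpa [hu, ← ofAdd_zsmul, ← ofAdd_add] using hst
  refine ⟨t ^ i, MulEquiv.toMonoidHom_injective (hom_ext ?_ ?_)⟩
  · simp [-map_zpow, hu, hu1, eq_neg_of_add_eq_zero_right hij]
  · simp [-map_zpow, ht, (Commute.self_zpow t i).symm.eq]

theorem exists_eq_conj_of_exponents [Fact (1 < k)] {φ : MulAut (EvenArtin k)}
    (hs : sExp (φ s) = ofAdd 1) (hst : tExp (φ s) = 1) (ht : tExp (φ t) = ofAdd 1) :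
    ∃ g, φ = MulAut.conj g := by
  obtain ⟨h, n, hn⟩ := exists_map_t_eq_conj_t_zpow φ
  obtain rfl : n = 1 := by simpa [hn, ← ofAdd_zsmul] using ht
  obtain ⟨g, hg⟩ := exists_eq_conj_of_map_t_eq (φ := (MulAut.conj h)⁻¹ * φ)
    (by simp [hn, mul_assoc]) (by simpa using hs) (by simpa using hst)
  exact ⟨h * g, by rw [map_mul, ← hg, mul_inv_cancel_left]⟩

/-! ### Outer automorphisms -/

theorem tExp_map (φ : MulAut (EvenArtin k)) (g : EvenArtin k) :
    tExp (φ g) = tExp (φ s) ^ (sExp g).toAdd * tExp (φ t) ^ (tExp g).toAdd := by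
  have h : tExp.comp φ.toMonoidHom = (zpowersHom _ (tExp (φ s))).comp sExp *
      (zpowersHom _ (tExp (φ t))).comp tExp :=
    hom_ext (by simp) (by simp)
  exact DFunLike.congr_fun h g

/-- The automorphism `s ↦ s ^ u`, `t ↦ t ^ v`. -/
def diagonal (u v : ℤˣ) : MulAut (EvenArtin k) :=
  have h : Commute ((t ^ (v : ℤ)) ^ k) (s ^ (u : ℤ) : EvenArtin k) := by
    simpa only [← zpow_natCast, zpow_comm t v] using
      (commute_t_pow_s.zpow_left v).zpow_right u
  let f : EvenArtin k →* EvenArtin k := lift _ _ h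
  have hf : f.comp f = .id _ :=
    hom_ext (by simp [f, ← zpow_mul]) (by simp [f, ← zpow_mul])
  f.toMulEquiv f hf hf

/-- The automorphism `s ↦ s * t ^ n`, `t ↦ t`. -/
def transvection (n : ℤ) : MulAut (EvenArtin k) :=
  have h (n : ℤ) : Commute (t ^ k) (s * t ^ n : EvenArtin k) :=
    commute_t_pow_s.mul_right (((Commute.refl t).pow_left k).zpow_right n)
  MonoidHom.toMulEquiv (lift _ _ (h n)) (lift _ _ (h (-n)))
    (hom_ext (by simp) (by simp)) (hom_ext (by simp) (by simp))

variable [Fact (1 < k)]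

theorem sExp_map_t (φ : MulAut (EvenArtin k)) : sExp (φ t) = 1 := by
  obtain ⟨h, n, hn⟩ := exists_map_t_eq_conj_t_zpow φ
  simp [hn]

theorem sExp_map (φ : MulAut (EvenArtin k)) (g : EvenArtin k) :
    sExp (φ g) = sExp g ^ (sExp (φ s)).toAdd := by
  have h : sExp.comp φ.toMonoidHom = (zpowGroupHom (sExp (φ s)).toAdd).comp sExp :=
    hom_ext (by simp [← ofAdd_zsmul]) (by simp [sExp_map_t])
  exact DFunLike.congr_fun h g

/-- The sign by which an automorphism acts on the exponent sum in `s`. -/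
def sSign : MulAut (EvenArtin k) →* ℤˣ :=
  MonoidHom.toHomUnits
    { toFun φ := (sExp (φ s)).toAdd
      map_one' := by simp
      map_mul' φ ψ := by simp [sExp_map φ (ψ s)] }

/-- The sign by which an automorphism acts on the exponent sum in `t`, modulo that in `s`. -/
def tSign : MulAut (EvenArtin k) →* ℤˣ :=
  MonoidHom.toHomUnits
    { toFun φ := (tExp (φ t)).toAdd
      map_one' := by simp
      map_mul' φ ψ := by simp [tExp_map φ (ψ t), sExp_map_t, mul_comm] }

@[simp]
theorem coe_sSign (φ : MulAut (EvenArtin k)) : (sSign φ : ℤ) = (sExp (φ s)).toAdd := rfl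

@[simp]
theorem coe_tSign (φ : MulAut (EvenArtin k)) : (tSign φ : ℤ) = (tExp (φ t)).toAdd := rfl

/-- The exponent sum of `t` in the image of `s`, normalised by `tSign`. -/
def shear (φ : MulAut (EvenArtin k)) : ℤ := tSign φ * (tExp (φ s)).toAdd

theorem shear_mul (φ ψ : MulAut (EvenArtin k)) :
    shear (φ * ψ) = sSign ψ * tSign ψ * shear φ + shear ψ := by
  have h := congrArg toAdd (tExp_map φ (ψ s))
  simp only [toAdd_mul, toAdd_zpow, smul_eq_mul, ← coe_sSign, ← coe_tSign] at h
  simp only [shear, MulAut.mul_apply, map_mul, Units.val_mul, h]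
  linear_combination (tSign ψ * (tExp (ψ s)).toAdd : ℤ) * Int.units_coe_mul_self (tSign φ)

theorem shear_eq_zero_iff {φ : MulAut (EvenArtin k)} : shear φ = 0 ↔ tExp (φ s) = 1 := by
  simp only [shear, mul_eq_zero, Units.ne_zero, false_or, toAdd_eq_zero]

theorem exists_sSign_tSign_shear_eq (u v : ℤˣ) (n : ℤ) :
    ∃ φ : MulAut (EvenArtin k), sSign φ = u ∧ tSign φ = v ∧ shear φ = n := by
  let φ : MulAut (EvenArtin k) := diagonal u v * transvection n
  have hs : φ s = s ^ (u : ℤ) * (t ^ (v : ℤ)) ^ n := by simp [φ, diagonal, transvection]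
  have ht : φ t = t ^ (v : ℤ) := by simp [φ, diagonal, transvection]
  refine ⟨φ, Units.ext ?_, Units.ext ?_, ?_⟩
  · rw [coe_sSign, hs]
    simp
  · rw [coe_tSign, ht]
    simp
  · rw [shear, coe_tSign, hs, ht]
    simp [mul_left_comm _ n]

/-- The isomorphism between the multiplicative and the additive model of the group `C₂`. -/
noncomputable def signEquiv : ℤˣ ≃* Multiplicative (ZMod 2) :=
  mulEquivOfPrimeCardEq (p := 2) (by simp) (by simp)

/-- The class of an automorphism in `Out`, read off from its matrix on the abelianization: modulo
`-1` this matrix is an element of `ℤ ⋊ C₂`, and `tSign` records the remaining factor `C₂`. -/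
noncomputable def outClass : MulAut (EvenArtin k) →* DihedralGroup 0 × Multiplicative (ZMod 2) :=
  (dihedralHom (sSign * tSign) (fun φ ↦ Int.cast (shear φ)) fun φ ψ ↦ by
    simp [shear_mul, Units.smul_def]).prod (signEquiv.toMonoidHom.comp tSign)

theorem outClass_eq_one_iff {φ : MulAut (EvenArtin k)} :
    outClass φ = 1 ↔ sExp (φ s) = ofAdd 1 ∧ tExp (φ s) = 1 ∧ tExp (φ t) = ofAdd 1 := by
  have hs : sExp (φ s) = ofAdd 1 ↔ sSign φ = 1 := by rw [Units.ext_iff]; rfl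
  have ht : tExp (φ t) = ofAdd 1 ↔ tSign φ = 1 := by rw [Units.ext_iff]; rfl
  have hC₂ : signEquiv.toMonoidHom.comp tSign φ = 1 ↔ tSign φ = 1 :=
    map_eq_one_iff _ signEquiv.injective
  rw [outClass, MonoidHom.prod_apply, Prod.mk_eq_one, dihedralHom_eq_one_iff, Int.cast_eq_zero,
    shear_eq_zero_iff, hs, ht, hC₂, MonoidHom.mul_apply]
  constructor
  · rintro ⟨⟨h, hst⟩, hv⟩
    exact ⟨by rwa [hv, mul_one] at h, hst, hv⟩
  · rintro ⟨hu, hst, hv⟩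
    exact ⟨⟨by rw [hu, hv, mul_one], hst⟩, hv⟩

theorem outClass_surjective : Function.Surjective (outClass (k := k)) := by
  rintro ⟨n | n, z⟩ <;> obtain ⟨n, rfl⟩ := ZMod.intCast_surjective n <;>
    obtain ⟨v, rfl⟩ := signEquiv.surjective z
  · obtain ⟨φ, hs, ht, rfl⟩ := exists_sSign_tSign_shear_eq (k := k) v v n
    have h : (sSign * tSign : MulAut (EvenArtin k) →* ℤˣ) φ = 1 := by
      simp [hs, ht]
    exact ⟨φ, Prod.ext (dihedralHom_of_eq_one h) (congrArg signEquiv ht)⟩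
  · obtain ⟨φ, hs, ht, rfl⟩ := exists_sSign_tSign_shear_eq (k := k) (-v) v n
    have h : (sSign * tSign : MulAut (EvenArtin k) →* ℤˣ) φ ≠ 1 := by
      simp [hs, ht]
    exact ⟨φ, Prod.ext (dihedralHom_of_ne_one h) (congrArg signEquiv ht)⟩

theorem outClass_ker :
    (outClass (k := k)).ker = (MulAut.conj : EvenArtin k →* MulAut (EvenArtin k)).range := by
  ext φ
  rw [MonoidHom.mem_ker, outClass_eq_one_iff, MonoidHom.mem_range]
  constructor
  · rintro ⟨hs, hst, ht⟩
    obtain ⟨g, rfl⟩ := exists_eq_conj_of_exponents hs hst ht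
    exact ⟨g, rfl⟩
  · rintro ⟨g, rfl⟩
    simp

end EvenArtin

/-- for the rank-2 Artin group `A` with even label `m ≥ 4`,
`Out(A) = Aut(A)/Inn(A)` is infinite and isomorphic to `(ℤ ⋊ C₂) × C₂`
(the infinite dihedral group `DihedralGroup 0` times `C₂`): there is a surjective
homomorphism `Aut(A) → (ℤ ⋊ C₂) × C₂` whose kernel is exactly the inner
automorphism group (whence `Out(A) ≅ (ℤ ⋊ C₂) × C₂`, an infinite group). -/
theorem stmt7 (m : ℕ) (hm : 4 ≤ m) (heven : Even m) :
    Infinite (DihedralGroup 0 × Multiplicative (ZMod 2)) ∧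
    ∃ f : MulAut (PresentedGroup (dihedralArtinRel m)) →*
        DihedralGroup 0 × Multiplicative (ZMod 2),
      Function.Surjective f ∧
      f.ker = (MulAut.conj : PresentedGroup (dihedralArtinRel m) →*
        MulAut (PresentedGroup (dihedralArtinRel m))).range := by
  obtain ⟨k, rfl⟩ := heven
  have : Fact (1 < k) := ⟨by omega⟩
  exact ⟨inferInstance, EvenArtin.outClass, EvenArtin.outClass_surjective, EvenArtin.outClass_ker⟩
end

section
/- Let K = ⟨x₁, …, x_n | x_i² = 1⟩ with the braid action as above (α_i : x_i ↦ x_{i+1}, x_{i+1} ↦ x_{i+1} x_i x_{i+1}). If w ∈ K satisfies α_j(w) is conjugate to w in K for all j = 1, …, n-1, then w is conjugate in K to a power of δ = x₁x₂⋯x_n. -/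
/-- Relators for the free product `⋆_k C₂ = ⟨x₀, …, x_{k-1} | xᵢ² = 1⟩`. -/
def relC2s (k : ℕ) : Set (FreeGroup (Fin k)) :=
  {r | ∃ i : Fin k, r = FreeGroup.of i ^ 2}

/-!
The square of a braid generator `φᵢ` is a twist: it conjugates the free factor `⟨xᵢ, xᵢ₊₁⟩` by
`c = xᵢ₊₁xᵢ` and fixes the other generators. Write `w`, up to conjugacy, as a cyclically reduced
word. A twist acts separately on the maximal runs of the letters `xᵢ, xᵢ₊₁`, its `n`-th power
replacing the run `u` by `cⁿ u c⁻ⁿ`, and the result is again cyclically reduced. If `u` has odd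
length, it is a reflection of the infinite dihedral group `⟨xᵢ, xᵢ₊₁⟩`, so that `cⁿ u c⁻ⁿ = c²ⁿ u`
has unbounded length, which is impossible since the cyclically reduced length is a conjugacy
invariant.

Hence every maximal run has even length, for every `i`. Applied to runs of length `1` and `3`, this
forces the two neighbours of each letter `x_b` of the cyclic word to be `x_{b-1}` and `x_{b+1}`,
with cyclic indices. The word therefore goes around the generators in one direction, and so it
spells a power of `δ` or of `δ⁻¹`.
-/

namespace FreeProductC2

section Words

variable {α : Type*}

/-- A word is reduced if no two adjacent letters are equal: the normal form of an element of a free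
product of copies of `C₂`. -/
def IsReduced (l : List α) : Prop := l.IsChain (· ≠ ·)

/-- A word is cyclically reduced if, read around a circle, no two adjacent letters are equal. This
is encoded as reducedness of `l ++ l`, so a one-letter word is not cyclically reduced, while the
empty word is. -/
def IsCyclicallyReduced (l : List α) : Prop := IsReduced (l ++ l)

theorem IsCyclicallyReduced.isReduced {l : List α} (h : IsCyclicallyReduced l) : IsReduced l :=
  List.IsChain.left_of_append h

theorem IsCyclicallyReduced.isReduced_flatten_replicate {l : List α} (h : IsCyclicallyReduced l)
    (n : ℕ) : IsReduced (List.replicate n l).flatten := by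
  obtain rfl | hl := eq_or_ne l []
  · simp [IsReduced]
  · refine (List.isChain_flatten fun hmem => hl (List.eq_of_mem_replicate hmem).symm).2
      ⟨fun l' hl' => List.eq_of_mem_replicate hl' ▸ h.isReduced, ?_⟩
    exact List.isChain_replicate_of_rel n (List.isChain_append.1 h).2.2

end Words

variable {k : ℕ}

/-- The free product of `k` copies of `C₂`. -/
abbrev K (k : ℕ) : Type := PresentedGroup (relC2s k)

/-- The standard generator `xᵢ` of `K k`. -/
abbrev gen (i : Fin k) : K k := PresentedGroup.of i

theorem gen_mul_self (i : Fin k) : gen i * gen i = 1 := by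
  have h : PresentedGroup.mk (relC2s k) (FreeGroup.of i ^ 2) = 1 :=
    PresentedGroup.one_of_mem ⟨i, rfl⟩
  rwa [pow_two, map_mul] at h

theorem inv_gen (i : Fin k) : (gen i)⁻¹ = gen i :=
  inv_eq_of_mul_eq_one_left (gen_mul_self i)

/-- The homomorphism out of `K k` sending the generators to given elements squaring to `1`. -/
def lift {H : Type*} [Group H] (f : Fin k → H) (hf : ∀ i, f i ^ 2 = 1) : K k →* H :=
  PresentedGroup.toGroup (f := f) (by rintro _ ⟨i, rfl⟩; simp [hf])

theorem lift_gen {H : Type*} [Group H] (f : Fin k → H) (hf : ∀ i, f i ^ 2 = 1) (i : Fin k) :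
    lift f hf (gen i) = f i :=
  PresentedGroup.toGroup.of _

theorem isConj_gen_iff {i j : Fin k} : IsConj (gen i) (gen j) ↔ i = j := by
  refine ⟨fun h => ?_, fun h => h ▸ IsConj.refl _⟩
  let exponents : K k →* (Fin k → Multiplicative (ZMod 2)) :=
    lift (fun i => Pi.mulSingle i (.ofAdd 1)) fun i => by
      rw [← Pi.mulSingle_pow, show Multiplicative.ofAdd (1 : ZMod 2) ^ 2 = 1 from rfl,
        Pi.mulSingle_one]
  have h' := isConj_iff_eq.1 (exponents.map_isConj h)
  by_contra hij
  have hi := congrFun h' i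
  rw [lift_gen, lift_gen, Pi.mulSingle_eq_same, Pi.mulSingle_eq_of_ne hij] at hi
  exact absurd hi (by decide)

/-- The element of `K k` spelled by a word. -/
def wordProd (l : List (Fin k)) : K k := (l.map gen).prod

@[simp] theorem wordProd_nil : wordProd ([] : List (Fin k)) = 1 := rfl

@[simp] theorem wordProd_cons (a : Fin k) (l : List (Fin k)) :
    wordProd (a :: l) = gen a * wordProd l := by
  simp [wordProd]

@[simp] theorem wordProd_append (l l' : List (Fin k)) :
    wordProd (l ++ l') = wordProd l * wordProd l' := by
  simp [wordProd]

theorem wordProd_reverse (l : List (Fin k)) : wordProd l.reverse = (wordProd l)⁻¹ := by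
  induction l with
  | nil => simp
  | cons a l ih => simp [ih, inv_gen]

theorem wordProd_flatten_replicate (n : ℕ) (l : List (Fin k)) :
    wordProd (List.replicate n l).flatten = wordProd l ^ n := by
  induction n with
  | zero => simp
  | succ n ih => rw [List.replicate_succ, List.flatten_cons, wordProd_append, ih, pow_succ']

theorem exists_wordProd_eq_of_mem_closure {S : Set (Fin k)} {g : K k}
    (hg : g ∈ Subgroup.closure (gen '' S)) :
    ∃ l : List (Fin k), (∀ a ∈ l, a ∈ S) ∧ wordProd l = g := by
  induction hg using Subgroup.closure_induction with
  | mem x hx =>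
    obtain ⟨i, hi, rfl⟩ := hx
    exact ⟨[i], by simpa using hi, by simp⟩
  | one => exact ⟨[], by simp, rfl⟩
  | mul x y _ _ hx hy =>
    obtain ⟨l, hl, rfl⟩ := hx
    obtain ⟨l', hl', rfl⟩ := hy
    exact ⟨l ++ l', fun a ha => (List.mem_append.1 ha).elim (hl a) (hl' a), by simp⟩
  | inv x _ hx =>
    obtain ⟨l, hl, rfl⟩ := hx
    exact ⟨l.reverse, fun a ha => hl a (List.mem_reverse.1 ha), wordProd_reverse l⟩

theorem wordProd_mem_closure {S : Set (Fin k)} {l : List (Fin k)} (hl : ∀ a ∈ l, a ∈ S) :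
    wordProd l ∈ Subgroup.closure (gen '' S) := by
  refine Subgroup.list_prod_mem _ fun g hg => ?_
  obtain ⟨a, ha, rfl⟩ := List.mem_map.1 hg
  exact Subgroup.subset_closure ⟨a, hl a ha, rfl⟩

theorem wordProd_surjective : Function.Surjective (wordProd (k := k)) := fun g => by
  obtain ⟨l, -, hl⟩ := exists_wordProd_eq_of_mem_closure (S := Set.univ) (g := g)
    (by rw [Set.image_univ, PresentedGroup.closure_range_of]; trivial)
  exact ⟨l, hl⟩

theorem exists_sublist_isReduced (l : List (Fin k)) :
    ∃ l', l'.Sublist l ∧ IsReduced l' ∧ wordProd l' = wordProd l := by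
  induction l with
  | nil => exact ⟨[], List.Sublist.refl _, List.isChain_nil, rfl⟩
  | cons a l ih =>
    obtain ⟨l', hsub, hred, hprod⟩ := ih
    by_cases ha : a ∈ l'.head?
    · obtain ⟨t, rfl⟩ := List.head?_eq_some_iff.1 ha
      refine ⟨t, ((List.sublist_cons_self a t).trans hsub).cons a, List.IsChain.tail hred, ?_⟩
      rw [wordProd_cons, ← hprod, wordProd_cons, ← mul_assoc, gen_mul_self, one_mul]
    · exact ⟨a :: l', hsub.cons_cons a, List.IsChain.cons hred fun b hb hab => ha (hab ▸ hb),
        by rw [wordProd_cons, wordProd_cons, hprod]⟩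

/-- A reduced word over `Fin k`, as a reduced word in the sense of `Monoid.CoprodI`. -/
def coprodWord (l : List (Fin k)) (hl : IsReduced l) :
    Monoid.CoprodI.Word fun _ : Fin k => Multiplicative (ZMod 2) where
  toList := l.map fun i => ⟨i, .ofAdd 1⟩
  ne_one := by
    rintro _ hb
    obtain ⟨i, -, rfl⟩ := List.mem_map.1 hb
    exact of_decide_eq_true rfl
  chain_ne := (List.isChain_map _).2 hl

theorem wordProd_injOn : Set.InjOn (wordProd (k := k)) {l | IsReduced l} := by
  classical
  intro l hl l' hl' h
  let toCoprod : K k →* Monoid.CoprodI fun _ : Fin k => Multiplicative (ZMod 2) :=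
    lift (fun i => Monoid.CoprodI.of (i := i) (.ofAdd 1)) fun i => by
      rw [← map_pow, show Multiplicative.ofAdd (1 : ZMod 2) ^ 2 = 1 from rfl, map_one]
  have toCoprod_wordProd : ∀ (l : List (Fin k)) (hl : IsReduced l),
      toCoprod (wordProd l) = (coprodWord l hl).prod := fun l hl => by
    rw [wordProd, map_list_prod, List.map_map, Monoid.CoprodI.Word.prod, coprodWord, List.map_map]
    exact congrArg List.prod (List.map_congr_left fun i _ => lift_gen _ _ i)
  have hwords : coprodWord l hl = coprodWord l' hl' :=
    Monoid.CoprodI.Word.equiv.symm.injective <| show _ = _ by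
      rw [Monoid.CoprodI.Word.equiv, Equiv.coe_fn_symm_mk, ← toCoprod_wordProd, h,
        toCoprod_wordProd]
  have hlists := congrArg (fun w => w.toList.map Sigma.fst) hwords
  simpa [coprodWord, Function.comp_def] using hlists

/-- The reduced word spelling an element of `K k`. -/
noncomputable def normalForm (g : K k) : List (Fin k) :=
  (exists_sublist_isReduced (Function.surjInv wordProd_surjective g)).choose

theorem isReduced_normalForm (g : K k) : IsReduced (normalForm g) :=
  (exists_sublist_isReduced (Function.surjInv wordProd_surjective g)).choose_spec.2.1

@[simp] theorem wordProd_normalForm (g : K k) : wordProd (normalForm g) = g :=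
  (exists_sublist_isReduced (Function.surjInv wordProd_surjective g)).choose_spec.2.2.trans
    (Function.surjInv_eq wordProd_surjective g)

theorem normalForm_wordProd {l : List (Fin k)} (hl : IsReduced l) : normalForm (wordProd l) = l :=
  wordProd_injOn (isReduced_normalForm _) hl (wordProd_normalForm _)

theorem normalForm_wordProd_sublist (l : List (Fin k)) :
    (normalForm (wordProd l)).Sublist l := by
  obtain ⟨l', hsub, hred, hprod⟩ := exists_sublist_isReduced l
  rwa [← hprod, normalForm_wordProd hred]

theorem normalForm_eq_nil_iff {g : K k} : normalForm g = [] ↔ g = 1 := by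
  refine ⟨fun h => ?_, fun h => ?_⟩
  · rw [← wordProd_normalForm g, h, wordProd_nil]
  · rw [h, ← wordProd_nil, normalForm_wordProd List.isChain_nil]

theorem mem_of_mem_normalForm {S : Set (Fin k)} {g : K k} (hg : g ∈ Subgroup.closure (gen '' S))
    {a : Fin k} (ha : a ∈ normalForm g) : a ∈ S := by
  obtain ⟨l, hl, rfl⟩ := exists_wordProd_eq_of_mem_closure hg
  exact hl a ((normalForm_wordProd_sublist l).subset ha)

/-- The word length of an element of `K k` with respect to the standard generators. -/
noncomputable def length (g : K k) : ℕ := (normalForm g).length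

theorem length_wordProd_le (l : List (Fin k)) : length (wordProd l) ≤ l.length :=
  (normalForm_wordProd_sublist l).length_le

theorem length_wordProd {l : List (Fin k)} (hl : IsReduced l) : length (wordProd l) = l.length :=
  congrArg List.length (normalForm_wordProd hl)

theorem length_mul_le (g h : K k) : length (g * h) ≤ length g + length h := by
  simpa [length] using length_wordProd_le (normalForm g ++ normalForm h)

theorem length_wordProd_pow {l : List (Fin k)} (hl : IsCyclicallyReduced l) (n : ℕ) :
    length (wordProd l ^ n) = n * l.length := by
  rw [← wordProd_flatten_replicate, length_wordProd (hl.isReduced_flatten_replicate n)]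
  simp

/- The length of the `n`-th power grows like `n * l.length`, whereas conjugation changes it by a
bounded amount. -/
theorem IsCyclicallyReduced.length_eq_of_isConj {l l' : List (Fin k)} (hl : IsCyclicallyReduced l)
    (hl' : IsCyclicallyReduced l') (h : IsConj (wordProd l) (wordProd l')) :
    l.length = l'.length := by
  have hle : ∀ {l l' : List (Fin k)}, IsCyclicallyReduced l → IsCyclicallyReduced l' →
      IsConj (wordProd l) (wordProd l') → l'.length ≤ l.length := by
    intro l l' hl hl' h
    obtain ⟨g, hg⟩ := isConj_iff.1 h
    have hbound (n : ℕ) : n * l'.length ≤ length g + n * l.length + length g⁻¹ :=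
      calc n * l'.length = length (g * wordProd l ^ n * g⁻¹) := by
            rw [← length_wordProd_pow hl', ← hg, conj_pow]
        _ ≤ length g + length (wordProd l ^ n) + length g⁻¹ :=
            (length_mul_le _ _).trans (Nat.add_le_add_right (length_mul_le _ _) _)
        _ = length g + n * l.length + length g⁻¹ := by rw [length_wordProd_pow hl]
    by_contra! hlt
    have := hbound (length g + length g⁻¹ + 1)
    nlinarith
  exact (hle hl' hl h.symm).antisymm (hle hl hl' h)

theorem isConj_gen_or_exists_isCyclicallyReduced (g : K k) :
    (∃ i, IsConj g (gen i)) ∨ ∃ l, IsCyclicallyReduced l ∧ IsConj g (wordProd l) := by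
  rw [← wordProd_normalForm g]
  have hred := isReduced_normalForm g
  generalize normalForm g = l at hred ⊢
  induction l using List.bidirectionalRec with
  | nil => exact Or.inr ⟨[], List.isChain_nil, IsConj.refl _⟩
  | singleton a => exact Or.inl ⟨a, by rw [wordProd_cons, wordProd_nil, mul_one]⟩
  | cons_append a l b ih =>
    by_cases hab : b = a
    · subst hab
      have hconj : IsConj (wordProd (b :: (l ++ [b]))) (wordProd l) :=
        isConj_iff.2 ⟨gen b, by
          simp [inv_gen, mul_assoc, gen_mul_self, ← mul_assoc (gen b) (gen b)]⟩
      exact (ih hred.tail.left_of_append).imp (fun ⟨i, hi⟩ => ⟨i, hconj.trans hi⟩)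
        fun ⟨l', hl', h⟩ => ⟨l', hl', hconj.trans h⟩
    · refine Or.inr ⟨_, List.isChain_append.2 ⟨hred, hred, ?_⟩, IsConj.refl _⟩
      intro x hx y hy
      rw [← List.cons_append, List.getLast?_concat] at hx
      simp_all

section Syllables

variable {α : Type*} {S : Set α}

/-- The concatenation of a list of syllables, where the syllable `(s, u)` stands for the word
`s :: u`. Syllables are used with `s ∉ S` and all letters of `u` in `S`, for a set `S` of letters,
and then mark off the maximal runs `u` of letters of `S`, including the empty ones. -/
def joinSyllables (B : List (α × List α)) : List α := (B.map fun b => b.1 :: b.2).flatten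

/-- A pair `(s, u)` is an `S`-syllable if `u` is a word in the letters of `S` and `s ∉ S`. -/
def IsSyllable (S : Set α) (b : α × List α) : Prop := b.1 ∉ S ∧ ∀ a ∈ b.2, a ∈ S

@[simp] theorem joinSyllables_cons (b : α × List α) (B : List (α × List α)) :
    joinSyllables (b :: B) = b.1 :: (b.2 ++ joinSyllables B) := by
  simp [joinSyllables]

theorem joinSyllables_append (B B' : List (α × List α)) :
    joinSyllables (B ++ B') = joinSyllables B ++ joinSyllables B' := by
  simp [joinSyllables]

theorem exists_eq_append_joinSyllables (S : Set α) (l : List α) :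
    ∃ u B, (∀ a ∈ u, a ∈ S) ∧ (∀ b ∈ B, IsSyllable S b) ∧ l = u ++ joinSyllables B := by
  induction l with
  | nil => exact ⟨[], [], by simp, by simp, by simp [joinSyllables]⟩
  | cons a l ih =>
    obtain ⟨u, B, hu, hB, rfl⟩ := ih
    by_cases ha : a ∈ S
    · exact ⟨a :: u, B, List.forall_mem_cons.2 ⟨ha, hu⟩, hB, rfl⟩
    · exact ⟨[], (a, u) :: B, by simp, List.forall_mem_cons.2 ⟨⟨ha, hu⟩, hB⟩, by simp⟩

theorem exists_eq_joinSyllables {l : List α} (hl : ∀ a ∈ l.head?, a ∉ S) :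
    ∃ B, (∀ b ∈ B, IsSyllable S b) ∧ l = joinSyllables B := by
  obtain ⟨u, B, hu, hB, rfl⟩ := exists_eq_append_joinSyllables S l
  cases u with
  | nil => exact ⟨B, hB, rfl⟩
  | cons a u => exact absurd (hu a List.mem_cons_self) (hl a rfl)

theorem isReduced_joinSyllables_iff {B : List (α × List α)} (hB : ∀ b ∈ B, IsSyllable S b) :
    IsReduced (joinSyllables B) ↔
      (∀ b ∈ B, IsReduced b.2) ∧ B.IsChain fun b b' => b.2 = [] → b.1 ≠ b'.1 := by
  have cons_iff : ∀ b ∈ B, (b.1 :: b.2).IsChain (· ≠ ·) ↔ IsReduced b.2 := fun b hb =>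
    List.isChain_cons.trans <| and_iff_right fun a ha h =>
      (hB b hb).1 (h ▸ (hB b hb).2 a (List.mem_of_mem_head? ha))
  have junction_iff : ∀ b b', b ∈ B → b' ∈ B →
      ((∀ x ∈ (b.1 :: b.2).getLast?, ∀ y ∈ (b'.1 :: b'.2).head?, x ≠ y) ↔
        (b.2 = [] → b.1 ≠ b'.1)) := by
    rintro ⟨s, u⟩ ⟨s', u'⟩ hb hb'
    obtain rfl | ⟨v, a, rfl⟩ := u.eq_nil_or_concat'
    · simp
    · have ha : a ≠ s' := fun h => (hB _ hb').1 (h ▸ (hB _ hb).2 a (by simp))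
      rw [← List.cons_append, List.getLast?_concat]
      simpa using ha
  rw [joinSyllables, IsReduced, List.isChain_flatten (by simp), List.forall_mem_map,
    List.isChain_map]
  exact and_congr (forall₂_congr cons_iff) (List.IsChain.iff_of_mem_imp fun b b' hb hb' =>
    junction_iff b b' hb hb')

theorem isCyclicallyReduced_joinSyllables_iff {B : List (α × List α)}
    (hB : ∀ b ∈ B, IsSyllable S b) :
    IsCyclicallyReduced (joinSyllables B) ↔
      (∀ b ∈ B, IsReduced b.2) ∧ (B ++ B).IsChain fun b b' => b.2 = [] → b.1 ≠ b'.1 := by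
  rw [IsCyclicallyReduced, ← joinSyllables_append, isReduced_joinSyllables_iff (by simpa using hB)]
  simp

end Syllables

theorem isConj_apply_of_isConj {G : Type*} [Group G] {γ : MulAut G} {g h : G} (hgh : IsConj g h)
    (hg : IsConj (γ g) g) : IsConj (γ h) h :=
  (γ.toMonoidHom.map_isConj hgh).symm.trans (hg.trans hgh)

theorem isConj_pow_apply {G : Type*} [Group G] {γ : MulAut G} {g : G} (h : IsConj (γ g) g)
    (n : ℕ) : IsConj ((γ ^ n) g) g := by
  induction n with
  | zero => exact IsConj.refl g
  | succ n ih =>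
    rw [pow_succ', MulAut.mul_apply]
    exact (γ.toMonoidHom.map_isConj ih).trans h

/-- `γ` is the twist of `K k = ⟨S⟩ * ⟨Sᶜ⟩` by `c ∈ ⟨S⟩`: it conjugates the first free factor by `c`
and fixes the second one. -/
structure IsTwist (S : Set (Fin k)) (c : K k) (γ : MulAut (K k)) : Prop where
  mem_closure : c ∈ Subgroup.closure (gen '' S)
  apply_gen_of_mem : ∀ a ∈ S, γ (gen a) = c * gen a * c⁻¹
  apply_gen_of_notMem : ∀ a ∉ S, γ (gen a) = gen a

namespace IsTwist

variable {S : Set (Fin k)} {c : K k} {γ : MulAut (K k)}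

theorem apply_of_mem_closure (h : IsTwist S c γ) {g : K k}
    (hg : g ∈ Subgroup.closure (gen '' S)) : γ g = c * g * c⁻¹ := by
  have heq : Set.EqOn γ (MulAut.conj c) (gen '' S) := by
    rintro _ ⟨a, ha, rfl⟩
    exact h.apply_gen_of_mem a ha
  exact MonoidHom.eqOn_closure (f := γ.toMonoidHom) (g := (MulAut.conj c).toMonoidHom) heq hg

theorem pow (h : IsTwist S c γ) (n : ℕ) : IsTwist S (c ^ n) (γ ^ n) := by
  have hc : γ c = c := by rw [h.apply_of_mem_closure h.mem_closure, mul_inv_cancel_right]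
  induction n with
  | zero => exact ⟨by simp, by simp, by simp⟩
  | succ n ih =>
    refine ⟨pow_mem h.mem_closure _, fun a ha => ?_, fun a ha => ?_⟩
    · rw [pow_succ', MulAut.mul_apply, ih.apply_gen_of_mem a ha, map_mul, map_mul, map_inv, map_pow,
        hc, h.apply_gen_of_mem a ha]
      group
    · rw [pow_succ', MulAut.mul_apply, ih.apply_gen_of_notMem a ha, h.apply_gen_of_notMem a ha]

/-- The effect on a syllable of the twist by `c`. -/
noncomputable def twistSyllable (c : K k) (b : Fin k × List (Fin k)) : Fin k × List (Fin k) :=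
  (b.1, normalForm (c * wordProd b.2 * c⁻¹))

theorem isSyllable_twistSyllable (h : IsTwist S c γ) {b : Fin k × List (Fin k)}
    (hb : IsSyllable S b) : IsSyllable S (twistSyllable c b) :=
  ⟨hb.1, fun _ ha => mem_of_mem_normalForm (mul_mem (mul_mem h.mem_closure
    (wordProd_mem_closure hb.2)) (inv_mem h.mem_closure)) ha⟩

theorem apply_wordProd_joinSyllables (h : IsTwist S c γ) {B : List (Fin k × List (Fin k))}
    (hB : ∀ b ∈ B, IsSyllable S b) :
    γ (wordProd (joinSyllables B)) = wordProd (joinSyllables (B.map (twistSyllable c))) := by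
  induction B with
  | nil => simp [joinSyllables]
  | cons b B ih =>
    obtain ⟨hb, hB⟩ := List.forall_mem_cons.1 hB
    simp only [List.map_cons, joinSyllables_cons, wordProd_cons, wordProd_append, map_mul, ih hB,
      h.apply_gen_of_notMem _ hb.1, h.apply_of_mem_closure (wordProd_mem_closure hb.2),
      twistSyllable, wordProd_normalForm]

theorem isCyclicallyReduced_joinSyllables_map (h : IsTwist S c γ)
    {B : List (Fin k × List (Fin k))} (hB : ∀ b ∈ B, IsSyllable S b)
    (hred : IsCyclicallyReduced (joinSyllables B)) :
    IsCyclicallyReduced (joinSyllables (B.map (twistSyllable c))) := by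
  rw [isCyclicallyReduced_joinSyllables_iff hB] at hred
  rw [isCyclicallyReduced_joinSyllables_iff (S := S) (List.forall_mem_map.2 fun b hb =>
    h.isSyllable_twistSyllable (hB b hb)), ← List.map_append, List.isChain_map]
  refine ⟨List.forall_mem_map.2 fun b _ => isReduced_normalForm _,
    hred.2.imp_of_mem_imp fun b b' hb _ hne hnil => hne ?_⟩
  have hb_red : IsReduced b.2 := hred.1 b (by simpa using hb)
  rw [← normalForm_wordProd hb_red, normalForm_eq_nil_iff]
  simpa [twistSyllable, normalForm_eq_nil_iff, conj_eq_one_iff] using hnil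

theorem length_conj_le (h : IsTwist S c γ) {s : Fin k} (hs : s ∉ S) {u v : List (Fin k)}
    (hu : ∀ a ∈ u, a ∈ S) (hv : ∀ a ∈ v.head?, a ∉ S) (hred : IsCyclicallyReduced (s :: (u ++ v)))
    (hconj : IsConj (γ (wordProd (s :: (u ++ v)))) (wordProd (s :: (u ++ v)))) :
    length (c * wordProd u * c⁻¹) ≤ (s :: (u ++ v)).length := by
  obtain ⟨B, hB, rfl⟩ := exists_eq_joinSyllables hv
  have hB' : ∀ b ∈ (s, u) :: B, IsSyllable S b := List.forall_mem_cons.2 ⟨⟨hs, hu⟩, hB⟩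
  rw [← joinSyllables_cons (s, u) B] at hred hconj ⊢
  rw [h.apply_wordProd_joinSyllables hB'] at hconj
  rw [← (h.isCyclicallyReduced_joinSyllables_map hB' hred).length_eq_of_isConj hred hconj]
  simp only [List.map_cons, joinSyllables_cons, twistSyllable, List.length_cons,
    List.length_append, length]
  omega

end IsTwist

section Dihedral

variable {x y : Fin k}

theorem length_gen_mul_gen_pow (hxy : x ≠ y) (n : ℕ) : length ((gen y * gen x) ^ n) = 2 * n := by
  have hred : IsCyclicallyReduced [y, x] := by
    simp [IsCyclicallyReduced, IsReduced, hxy, hxy.symm]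
  simpa [mul_comm] using length_wordProd_pow hred n

theorem semiconjBy_wordProd {u : List (Fin k)} (hu : ∀ a ∈ u, a ∈ ({x, y} : Set (Fin k))) :
    SemiconjBy (wordProd u) (gen y * gen x) ((gen y * gen x) ^ (-1 : ℤ) ^ u.length) := by
  induction u with
  | nil => simp
  | cons a u ih =>
    obtain ⟨ha, hu⟩ := List.forall_mem_cons.1 hu
    have hgen : SemiconjBy (gen a) (gen y * gen x) (gen y * gen x)⁻¹ := by
      rw [SemiconjBy, mul_inv_rev, inv_gen, inv_gen]
      obtain rfl | rfl := ha
      · rw [mul_assoc]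
      · rw [← mul_assoc, gen_mul_self, one_mul, mul_assoc, gen_mul_self, mul_one]
    have hpow := (hgen.zpow_right ((-1) ^ u.length)).mul_left (ih hu)
    rwa [inv_zpow', ← neg_one_mul, ← pow_succ'] at hpow

theorem conj_wordProd_of_odd {u : List (Fin k)} (hu : ∀ a ∈ u, a ∈ ({x, y} : Set (Fin k)))
    (hodd : Odd u.length) (n : ℕ) :
    (gen y * gen x) ^ n * wordProd u * ((gen y * gen x) ^ n)⁻¹ =
      (gen y * gen x) ^ (2 * n) * wordProd u := by
  have h : SemiconjBy (wordProd u) (gen y * gen x) (gen y * gen x)⁻¹ := by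
    simpa [hodd.neg_one_pow] using semiconjBy_wordProd hu
  have h' := (h.pow_right n).inv_right
  rw [inv_pow, inv_inv] at h'
  rw [mul_assoc, h'.eq, ← mul_assoc, ← pow_add, two_mul]

theorem IsTwist.even_length {γ : MulAut (K k)} (h : IsTwist {x, y} (gen y * gen x) γ)
    (hxy : x ≠ y) {s : Fin k} (hs : s ∉ ({x, y} : Set (Fin k))) {u v : List (Fin k)}
    (hu : ∀ a ∈ u, a ∈ ({x, y} : Set (Fin k))) (hv : ∀ a ∈ v.head?, a ∉ ({x, y} : Set (Fin k)))
    (hred : IsCyclicallyReduced (s :: (u ++ v)))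
    (hconj : IsConj (γ (wordProd (s :: (u ++ v)))) (wordProd (s :: (u ++ v)))) :
    Even u.length := by
  by_contra hodd
  rw [Nat.not_even_iff_odd] at hodd
  have hbound (n : ℕ) : 2 * (2 * n) ≤ (s :: (u ++ v)).length + u.length :=
    calc 2 * (2 * n) = length ((gen y * gen x) ^ n * wordProd u * ((gen y * gen x) ^ n)⁻¹ *
            wordProd u.reverse) := by
          rw [conj_wordProd_of_odd hu hodd, wordProd_reverse, mul_inv_cancel_right,
            length_gen_mul_gen_pow hxy]
      _ ≤ (s :: (u ++ v)).length + u.length := (length_mul_le _ _).trans <|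
          Nat.add_le_add ((h.pow n).length_conj_le hs hu hv hred (isConj_pow_apply hconj n))
            ((length_wordProd_le _).trans_eq List.length_reverse)
  have := hbound ((s :: (u ++ v)).length + u.length + 1)
  omega

end Dihedral

/-- `γ` acts on the generators like the standard generator of the braid group which half-twists the
letters `x` and `y`. -/
structure IsHalfTwist (x y : Fin k) (γ : MulAut (K k)) : Prop where
  apply_left : γ (gen x) = gen y
  apply_right : γ (gen y) = gen y * gen x * gen y
  apply_of_notMem : ∀ a ∉ ({x, y} : Set (Fin k)), γ (gen a) = gen a

namespace IsHalfTwist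

variable {x y : Fin k} {γ : MulAut (K k)}

theorem isTwist_sq (h : IsHalfTwist x y γ) : IsTwist {x, y} (gen y * gen x) (γ ^ 2) := by
  refine ⟨mul_mem (Subgroup.subset_closure ⟨y, by simp⟩) (Subgroup.subset_closure ⟨x, by simp⟩),
    ?_, fun a ha => ?_⟩
  · rintro a (rfl | rfl)
    · rw [pow_two, MulAut.mul_apply, h.apply_left, h.apply_right, mul_inv_rev, inv_gen, inv_gen]
      simp only [mul_assoc, mul_right_inj]
      rw [← mul_assoc (gen a), gen_mul_self, one_mul]
    · simp only [pow_two, MulAut.mul_apply, h.apply_left, h.apply_right, map_mul, mul_inv_rev,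
        inv_gen, mul_assoc, mul_right_inj]
      rw [← mul_assoc (gen a), gen_mul_self, one_mul]
  · rw [pow_two, MulAut.mul_apply, h.apply_of_notMem a ha, h.apply_of_notMem a ha]

theorem not_isConj_apply_gen (h : IsHalfTwist x y γ) (hxy : x ≠ y) {a : Fin k}
    (ha : a ∈ ({x, y} : Set (Fin k))) : ¬ IsConj (γ (gen a)) (gen a) := by
  obtain rfl | rfl := ha
  · rw [h.apply_left, isConj_gen_iff]
    exact hxy.symm
  · have hconj : IsConj (gen x) (gen a * gen x * gen a) :=
      isConj_iff.2 ⟨gen a, by rw [inv_gen]⟩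
    rw [h.apply_right]
    exact fun h' => hxy (isConj_gen_iff.1 (hconj.trans h'))

end IsHalfTwist

section CyclicWords

variable {α : Type*} {L : ℕ}

/-- The subword of length `d` starting at position `p` of the cyclic word `f : ZMod L → α`. It may
wind around the circle several times. -/
def window (f : ZMod L → α) (p : ZMod L) (d : ℕ) : List α :=
  (List.range d).map fun j : ℕ => f (p + j)

/-- Every maximal run of letters of `S` in the cyclic word `f` has even length; a cyclic word with
all its letters in `S` has no such run. -/
def HasEvenRuns (f : ZMod L → α) (S : Set α) : Prop :=
  ∀ p d, f p ∉ S → (∀ a ∈ window f (p + 1) d, a ∈ S) → f (p + 1 + d) ∉ S → Even d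

@[simp] theorem length_window (f : ZMod L → α) (p : ZMod L) (d : ℕ) :
    (window f p d).length = d := by
  simp [window]

@[simp] theorem window_zero (f : ZMod L → α) (p : ZMod L) : window f p 0 = [] := rfl

theorem window_succ (f : ZMod L → α) (p : ZMod L) (d : ℕ) :
    window f p (d + 1) = f p :: window f (p + 1) d := by
  simp [window, List.range_succ_eq_map, Function.comp_def, add_assoc, add_comm (1 : ZMod L)]

theorem window_add (f : ZMod L → α) (p : ZMod L) (d d' : ℕ) :
    window f p (d + d') = window f p d ++ window f (p + d) d' := by
  simp [window, List.range_add, Function.comp_def, add_assoc]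

theorem window_mul {f : ZMod L → α} {d : ℕ} (h : ∀ p, f (p + d) = f p) (p : ZMod L)
    (q : ℕ) : window f p (d * q) = (List.replicate q (window f p d)).flatten := by
  induction q with
  | zero => simp
  | succ q ih =>
    have hshift : window f (p + d) (d * q) = window f p (d * q) :=
      List.map_congr_left fun j _ => by rw [add_right_comm, h]
    rw [mul_add_one, add_comm, window_add, hshift, ih, List.replicate_succ, List.flatten_cons]

theorem isReduced_window {f : ZMod L → α} (hf : ∀ p, f p ≠ f (p + 1)) (p : ZMod L) (d : ℕ) :
    IsReduced (window f p d) := by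
  refine (List.isChain_map _).2 (List.isChain_iff_getElem.2 fun j hj => ?_)
  simpa [add_assoc] using hf (p + j)

theorem isCyclicallyReduced_window {f : ZMod L → α} (hf : ∀ p, f p ≠ f (p + 1)) (p : ZMod L) :
    IsCyclicallyReduced (window f p L) := by
  have h := isReduced_window hf p (L + L)
  rwa [window_add, ZMod.natCast_self, add_zero] at h

theorem IsCyclicallyReduced.exists_window_eq {l : List α} (hl : IsCyclicallyReduced l)
    (hne : l ≠ []) :
    ∃ f : ZMod l.length → α, (∀ p, f p ≠ f (p + 1)) ∧ window f 0 l.length = l := by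
  have : NeZero l.length := ⟨by simpa using hne⟩
  refine ⟨fun p => l[p.val]'p.val_lt, fun p => ?_, List.ext_getElem (by simp) fun j hj _ => ?_⟩
  · have hp := p.val_lt
    have h := List.isChain_iff_getElem.1 hl p.val (by rw [List.length_append]; omega)
    have hval : (p + 1).val = (p.val + 1) % l.length := by
      rw [← ZMod.val_natCast, Nat.cast_add_one, ZMod.natCast_zmod_val]
    simp only [hval]
    rw [List.getElem_append_left hp] at h
    obtain hlt | heq := Nat.lt_or_eq_of_le (Nat.succ_le_of_lt hp)
    · simpa [List.getElem_append_left hlt, Nat.mod_eq_of_lt hlt] using h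
    · simpa [List.getElem_append_right heq.ge, ← heq] using h
  · have hj' : j < l.length := by simpa using hj
    simp [window, Nat.mod_eq_of_lt hj']

theorem isConj_wordProd_window [NeZero L] (f : ZMod L → Fin k) (p q : ZMod L) :
    IsConj (wordProd (window f p L)) (wordProd (window f q L)) := by
  obtain ⟨n, hn⟩ := ZMod.natCast_zmod_surjective (q - p)
  have h : window f p L ++ window f p n = window f p n ++ window f q L := by
    rw [← add_sub_cancel p q, ← hn, ← window_add, add_comm n L, window_add, ZMod.natCast_self,
      add_zero]
  refine IsConj.symm (isConj_iff.2 ⟨wordProd (window f p n), ?_⟩)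
  rw [← wordProd_append, ← h, wordProd_append, mul_inv_cancel_right]

theorem IsTwist.hasEvenRuns [NeZero L] {x y : Fin k} (hxy : x ≠ y) {γ : MulAut (K k)}
    (h : IsTwist {x, y} (gen y * gen x) γ) {f : ZMod L → Fin k} (hf : ∀ p, f p ≠ f (p + 1))
    (hconj : IsConj (γ (wordProd (window f 0 L))) (wordProd (window f 0 L))) :
    HasEvenRuns f {x, y} := by
  intro p d hp hrun hend
  have hle : d + 1 ≤ L := by
    by_contra! hlt
    obtain ⟨e, rfl⟩ := Nat.exists_eq_add_one_of_ne_zero (NeZero.ne L)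
    refine hp (hrun _ (List.mem_map.2 ⟨e, List.mem_range.2 (by omega), congrArg f ?_⟩))
    have := ZMod.natCast_self (e + 1)
    push_cast at this
    linear_combination this
  obtain ⟨e, he⟩ := Nat.exists_eq_add_of_le' hle
  have hsplit : window f p L = f p :: (window f (p + 1) d ++ window f (p + 1 + d) e) := by
    rw [← window_add, ← window_succ]
    exact congrArg _ (by omega)
  have hred := isCyclicallyReduced_window hf p
  have hconj := isConj_apply_of_isConj (isConj_wordProd_window f 0 p) hconj
  rw [hsplit] at hred hconj
  simpa using h.even_length hxy hp hrun (fun a ha => by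
    cases e with
    | zero => simp at ha
    | succ e => rw [window_succ] at ha; simp_all) hred hconj

end CyclicWords

section EvenRuns

variable {L : ℕ}

theorem HasEvenRuns.comp {α β : Type*} {f : ZMod L → α} {g : α → β} {S : Set β}
    (h : HasEvenRuns f (g ⁻¹' S)) : HasEvenRuns (g ∘ f) S := by
  intro p d hp hrun hend
  refine h p d hp (fun a ha => hrun (g a) ?_) hend
  obtain ⟨j, hj, rfl⟩ := List.mem_map.1 ha
  exact List.mem_map_of_mem hj

theorem HasEvenRuns.mem_or_mem_of_mem {α : Type*} {f : ZMod L → α} {S : Set α}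
    (h : HasEvenRuns f S) {p : ZMod L} (h₁ : f (p + 1) ∈ S) : f p ∈ S ∨ f (p + 2) ∈ S := by
  by_contra! hends
  have := h p 1 hends.1 (by simpa [window] using h₁) (by norm_num [add_assoc, hends.2])
  exact absurd this (by decide)

theorem HasEvenRuns.mem_or_mem_of_mem₃ {α : Type*} {f : ZMod L → α} {S : Set α}
    (h : HasEvenRuns f S) {p : ZMod L} (h₁ : f (p + 1) ∈ S) (h₂ : f (p + 2) ∈ S)
    (h₃ : f (p + 3) ∈ S) : f p ∈ S ∨ f (p + 4) ∈ S := by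
  by_contra! hends
  have := h p 3 hends.1 (by norm_num [window, List.range_succ, add_assoc, *])
    (by norm_num [add_assoc, hends.2])
  exact absurd this (by decide)

variable {m : ℕ} {v : ZMod L → ℕ}

theorem neighbours_of_pos_of_lt (hne : ∀ p, v p ≠ v (p + 1))
    (hruns : ∀ i < m, HasEvenRuns v {i, i + 1}) {p : ZMod L} (h₀ : 0 < v (p + 1))
    (hm : v (p + 1) < m) :
    v p + 1 = v (p + 1) ∧ v (p + 2) = v (p + 1) + 1 ∨
      v p = v (p + 1) + 1 ∧ v (p + 2) + 1 = v (p + 1) := by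
  have hne₀ := hne p
  have hne₁ := hne (p + 1)
  have hbelow := (hruns (v (p + 1) - 1) (by omega)).mem_or_mem_of_mem (p := p)
    (by simp [Nat.sub_add_cancel h₀])
  have habove := (hruns (v (p + 1)) hm).mem_or_mem_of_mem (p := p) (by simp)
  rw [add_assoc, one_add_one_eq_two] at hne₁
  simp only [Set.mem_insert_iff, Set.mem_singleton_iff] at hbelow habove
  omega

/- In both lemmas below, the two neighbours of an extreme letter cannot agree, since the letters
around them would then delimit a run of length `3`. -/
theorem neighbours_of_eq_zero (hle : ∀ p, v p ≤ m) (hne : ∀ p, v p ≠ v (p + 1))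
    (hruns : ∀ i < m, HasEvenRuns v {i, i + 1}) (hm : 0 < m) {p : ZMod L} (h₀ : v (p + 2) = 0) :
    v (p + 1) = m ∧ v (p + 3) = 1 ∨ v (p + 1) = 1 ∧ v (p + 3) = m := by
  have hleft := neighbours_of_pos_of_lt (p := p) hne hruns
  have hright := neighbours_of_pos_of_lt (p := p + 2) hne hruns
  have hne₁ := hne (p + 1)
  have hne₂ := hne (p + 2)
  have hle₁ := hle (p + 1)
  have hle₃ := hle (p + 3)
  have hone := (hruns 0 hm).mem_or_mem_of_mem (p := p + 1)
  have hthree := (hruns 0 hm).mem_or_mem_of_mem₃ (p := p)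
  norm_num only [add_assoc, Set.mem_insert_iff, Set.mem_singleton_iff]
    at hright hne₁ hne₂ hone hthree
  omega

theorem neighbours_of_eq_last (hle : ∀ p, v p ≤ m) (hne : ∀ p, v p ≠ v (p + 1))
    (hruns : ∀ i < m, HasEvenRuns v {i, i + 1}) (hm : 0 < m) {p : ZMod L} (hlast : v (p + 2) = m) :
    v (p + 1) + 1 = m ∧ v (p + 3) = 0 ∨ v (p + 1) = 0 ∧ v (p + 3) + 1 = m := by
  have hleft := neighbours_of_pos_of_lt (p := p) hne hruns
  have hright := neighbours_of_pos_of_lt (p := p + 2) hne hruns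
  have hne₁ := hne (p + 1)
  have hne₂ := hne (p + 2)
  have hle₁ := hle (p + 1)
  have hle₃ := hle (p + 3)
  have hone := (hruns (m - 1) (by omega)).mem_or_mem_of_mem (p := p + 1)
  have hthree := (hruns (m - 1) (by omega)).mem_or_mem_of_mem₃ (p := p)
  norm_num only [add_assoc, Set.mem_insert_iff, Set.mem_singleton_iff]
    at hright hne₁ hne₂ hone hthree
  omega

theorem eq_add_one_iff {a b : Fin (m + 1)} :
    a = b + 1 ↔ (a : ℕ) = b + 1 ∨ (b : ℕ) = m ∧ (a : ℕ) = 0 := by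
  have ha := a.is_lt
  rw [Fin.ext_iff, Fin.val_add_one]
  split_ifs with h
  · have : (b : ℕ) = m := h ▸ Fin.val_last m
    omega
  · have := Fin.val_lt_last h
    omega

theorem eq_add_one_or_eq_sub_one {f : ZMod L → Fin (m + 1)} (hf : ∀ p, f p ≠ f (p + 1))
    (hruns : ∀ i : Fin m, HasEvenRuns f {i.castSucc, i.succ}) (p : ZMod L) :
    f (p + 1) = f p + 1 ∧ f (p + 2) = f (p + 1) + 1 ∨
      f (p + 1) = f p - 1 ∧ f (p + 2) = f (p + 1) - 1 := by
  have hm : 0 < m := by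
    have := Fin.val_ne_of_ne (hf p)
    omega
  obtain ⟨p, rfl⟩ : ∃ q, p = q + 1 := ⟨p - 1, (sub_add_cancel p 1).symm⟩
  have hle (q : ZMod L) : (f q : ℕ) ≤ m := (f q).is_le
  have hne (q : ZMod L) : (f q : ℕ) ≠ f (q + 1) := Fin.val_ne_of_ne (hf q)
  have hruns' (i : ℕ) (hi : i < m) : HasEvenRuns (Fin.val ∘ f) {i, i + 1} := by
    have hpre : (Fin.val ⁻¹' {i, i + 1} : Set (Fin (m + 1))) =
        {(⟨i, hi⟩ : Fin m).castSucc, (⟨i, hi⟩ : Fin m).succ} := by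
      ext a
      simp [Fin.ext_iff]
    exact HasEvenRuns.comp (hpre ▸ hruns ⟨i, hi⟩)
  have hzero := neighbours_of_eq_zero (p := p) hle hne hruns' hm
  have hlast := neighbours_of_eq_last (p := p) hle hne hruns' hm
  have hinterior := neighbours_of_pos_of_lt (p := p + 1) hne hruns'
  have := hle (p + 2)
  simp only [eq_sub_iff_add_eq, eq_comm (a := _ + (1 : Fin (m + 1))), eq_add_one_iff]
  norm_num only [add_assoc, Function.comp_apply] at hzero hlast hinterior ⊢
  omega

end EvenRuns

section Progressions

open scoped Fin.CommRing

variable {m L : ℕ}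

/- A cyclic word which changed direction between two consecutive letters would force `ε = -ε`. -/
theorem forall_add_or_forall_sub {G : Type*} [AddCommGroup G] [NeZero L] {f : ZMod L → G} {ε : G}
    (h : ∀ p, f (p + 1) = f p + ε ∧ f (p + 2) = f (p + 1) + ε ∨
      f (p + 1) = f p - ε ∧ f (p + 2) = f (p + 1) - ε) :
    (∀ p, f (p + 1) = f p + ε) ∨ ∀ p, f (p + 1) = f p - ε := by
  have forall_of_zero {ε' : G} (h₀ : f (0 + 1) = f 0 + ε')
      (hstep : ∀ p, f (p + 1) = f p + ε' → f (p + 2) = f (p + 1) + ε') (p : ZMod L) :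
      f (p + 1) = f p + ε' := by
    obtain ⟨n, rfl⟩ := ZMod.natCast_zmod_surjective p
    induction n with
    | zero => simpa using h₀
    | succ n ih => simpa [add_assoc, one_add_one_eq_two] using hstep n ih
  simp only [sub_eq_add_neg] at h ⊢
  have eq_neg {p : ZMod L} (hadd : f (p + 1) = f p + ε) (hsub : f (p + 1) = f p + -ε) : ε = -ε :=
    add_left_cancel (hadd.symm.trans hsub)
  obtain h₀ | h₀ := h 0
  · refine Or.inl (forall_of_zero h₀.1 fun p hp => ?_)
    obtain hp' | hp' := h p
    · exact hp'.2
    · rw [hp'.2, ← eq_neg hp hp'.1]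
  · refine Or.inr (forall_of_zero h₀.1 fun p hp => ?_)
    obtain hp' | hp' := h p
    · rw [hp'.2, ← eq_neg hp'.1 hp]
    · exact hp'.2

theorem map_add_natCast {R : Type*} [Ring R] {f : ZMod L → R} {ε : R}
    (h : ∀ p, f (p + 1) = f p + ε) (p : ZMod L) (j : ℕ) : f (p + j) = f p + j * ε := by
  induction j with
  | zero => simp
  | succ j ih => rw [Nat.cast_succ, ← add_assoc, h, ih, Nat.cast_succ, add_one_mul, add_assoc]

theorem exists_isConj_wordProd_window_pow [NeZero L] {f : ZMod L → Fin (m + 1)}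
    {ε : (Fin (m + 1))ˣ} (h : ∀ p, f (p + 1) = f p + ε) (c : Fin (m + 1)) :
    ∃ q : ℕ, IsConj (wordProd (window f 0 L))
      (wordProd ((List.finRange (m + 1)).map fun j => c + j * (ε : Fin (m + 1))) ^ q) := by
  have hperiod (p : ZMod L) : f (p + (m + 1 : ℕ)) = f p := by
    rw [map_add_natCast h, Fin.natCast_self, zero_mul, add_zero]
  have hdvd : m + 1 ∣ L := by
    have hL := map_add_natCast h 0 L
    rw [ZMod.natCast_self, add_zero, left_eq_add, Units.mul_left_eq_zero] at hL
    exact Fin.natCast_eq_zero.1 hL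
  obtain ⟨p, hp⟩ : ∃ p, f p = c := by
    refine ⟨0 + (((c - f 0) * (↑ε⁻¹ : Fin (m + 1))).val : ℕ), ?_⟩
    rw [map_add_natCast h, Fin.cast_val_eq_self, Units.inv_mul_cancel_right, add_sub_cancel]
  have hwindow : window f p (m + 1) =
      (List.finRange (m + 1)).map fun j => c + j * (ε : Fin (m + 1)) :=
    List.ext_getElem (by simp) fun j hj _ => by
      have hj' : ((j : ℕ) : Fin (m + 1)) = ⟨j, by simpa using hj⟩ :=
        Fin.ext (Fin.val_cast_of_lt (by simpa using hj))
      simp [window, map_add_natCast h, hp, hj']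
  obtain ⟨q, rfl⟩ := hdvd
  refine ⟨q, (isConj_wordProd_window f 0 p).trans ?_⟩
  rw [window_mul hperiod, wordProd_flatten_replicate, hwindow]

theorem exists_isConj_wordProd_finRange_zpow [NeZero L] {f : ZMod L → Fin (m + 1)}
    (hf : ∀ p, f p ≠ f (p + 1)) (hruns : ∀ i : Fin m, HasEvenRuns f {i.castSucc, i.succ}) :
    ∃ k : ℤ, IsConj (wordProd (window f 0 L)) (wordProd (List.finRange (m + 1)) ^ k) := by
  obtain h | h := forall_add_or_forall_sub (eq_add_one_or_eq_sub_one hf hruns)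
  · obtain ⟨q, hq⟩ := exists_isConj_wordProd_window_pow (ε := 1) h 0
    exact ⟨q, by simpa using hq⟩
  · obtain ⟨q, hq⟩ := exists_isConj_wordProd_window_pow (ε := -1)
      (by simpa [sub_eq_add_neg] using h) (Fin.last m)
    have hrev : (fun j => Fin.last m + j * ((-1 : (Fin (m + 1))ˣ) : Fin (m + 1))) = Fin.rev := by
      ext1 j
      rw [← Fin.last_sub]
      simp [sub_eq_add_neg]
    rw [hrev, ← List.finRange_reverse, wordProd_reverse] at hq
    exact ⟨-q, by simpa using hq⟩

end Progressions

end FreeProductC2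

open FreeProductC2

/-- let `K = ⋆_{m+1} C₂` (`n = m+1 ≥ 2` factors) with the braid action
given by automorphisms `φᵢ : xᵢ ↦ x_{i+1}, x_{i+1} ↦ x_{i+1} xᵢ x_{i+1}, x_j ↦ x_j`.
If `w ∈ K` satisfies `φᵢ(w)` conjugate to `w` for all `i`, then `w` is conjugate to a
power of `δ = x₀x₁⋯x_m`. -/
theorem stmt16 (m : ℕ) (hm : 1 ≤ m)
    (φ : Fin m → MulAut (PresentedGroup (relC2s (m + 1))))
    (hφ : ∀ (i : Fin m) (j : Fin (m + 1)),
      φ i (PresentedGroup.of j) =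
        if j = i.castSucc then PresentedGroup.of i.succ
        else if j = i.succ then
          PresentedGroup.of i.succ * PresentedGroup.of i.castSucc * PresentedGroup.of i.succ
        else PresentedGroup.of j)
    (w : PresentedGroup (relC2s (m + 1)))
    (hw : ∀ i : Fin m, IsConj (φ i w) w) :
    ∃ k : ℤ, IsConj w
      (((List.ofFn fun j : Fin (m + 1) =>
        (PresentedGroup.of j : PresentedGroup (relC2s (m + 1)))).prod) ^ k) := by
  have hhalf (i : Fin m) : IsHalfTwist i.castSucc i.succ (φ i) :=
    ⟨by simp [hφ], by simp [hφ, i.castSucc_lt_succ.ne'], fun a ha => by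
      rw [Set.mem_insert_iff, Set.mem_singleton_iff, not_or] at ha
      rw [hφ, if_neg ha.1, if_neg ha.2]⟩
  have hδ : (List.ofFn fun j => gen j).prod = wordProd (List.finRange (m + 1)) := by
    rw [List.ofFn_eq_map, wordProd]
  rw [hδ]
  obtain ⟨j, hj⟩ | ⟨l, hl, hwl⟩ := isConj_gen_or_exists_isCyclicallyReduced w
  · obtain ⟨i, hi⟩ : ∃ i : Fin m, j ∈ ({i.castSucc, i.succ} : Set (Fin (m + 1))) :=
      j.eq_zero_or_eq_succ.elim (fun h => ⟨⟨0, hm⟩, Or.inl h⟩) fun ⟨i, h⟩ => ⟨i, Or.inr h⟩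
    exact ((hhalf i).not_isConj_apply_gen i.castSucc_lt_succ.ne hi
      (isConj_apply_of_isConj hj (hw i))).elim
  obtain rfl | hne := eq_or_ne l []
  · exact ⟨0, by simpa using hwl⟩
  have : NeZero l.length := ⟨by simpa using hne⟩
  obtain ⟨f, hf, hfl⟩ := hl.exists_window_eq hne
  have hruns (i : Fin m) : HasEvenRuns f {i.castSucc, i.succ} :=
    (hhalf i).isTwist_sq.hasEvenRuns i.castSucc_lt_succ.ne hf <| by
      rw [hfl]
      exact isConj_pow_apply (isConj_apply_of_isConj hwl (hw i)) 2
  obtain ⟨k, hk⟩ := exists_isConj_wordProd_finRange_zpow hf hruns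
  exact ⟨k, hwl.trans (hfl ▸ hk)⟩
end

section
/- Let F_n be free on u₁, …, u_n with B_n acting by Artin's representation, and suppose n ≥ 3. If x ∈ F_n satisfies α_i(x) conjugate to x (in F_n) for all i = 1, …, n-1, then x is conjugate to a power of u₁u₂⋯u_n. -/
/-!
Write `c = uᵢ uᵢ₊₁`. The square of the `i`-th Artin generator fixes `c` and every `uⱼ` with
`j ≠ i, i + 1`, and conjugates `uᵢ` by `c`: in the basis obtained by replacing `uᵢ₊₁` with `c`, it
is a partial conjugation. On the kernel of a homomorphism to `ℤ` sending `c` to `1`, conjugation by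
`c` and this partial conjugation both translate the letters `cⁿ a c⁻ⁿ` of a free basis, the first
all of them and the second only those with `a = uᵢ`. The letters needed to write an element up to
conjugacy form a well-defined finite set, and a finite set is not stable under a nonzero
translation. As all `uⱼ` have the same exponent sum in `x`, the homomorphism can be chosen so that
`x` lies in its kernel, and hence `x` is conjugate into `⟨uᵢ, uᵢ₊₁⟩` or into
`⟨c, uⱼ : j ≠ i, i + 1⟩`.

The `i`-th generator carries the letter `uᵢ` to `uᵢ₊₁`, so if `x` can be written without one of the
letters up to conjugacy, it can be written without any of them, and `x = 1`; this settles the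
first alternative. If the second one holds for every `i`, pass to the basis of the prefix products
`vₖ = u₀ ⋯ uₖ`: since `uᵢ uᵢ₊₁ = vᵢ₋₁⁻¹ vᵢ₊₁`, up to conjugacy `x` can be written without `vᵢ` for
each `i < m`, so only `v_m` is left.
-/

namespace BraidAction

open Multiplicative SemidirectProduct Subgroup

variable {I G H : Type*} [Group G] [Group H]

section ConjInto

variable {x y : G} {K L : Subgroup G}

/-- The element `x` is conjugate to an element of the subgroup `K`. -/
def IsConjInto (x : G) (K : Subgroup G) : Prop :=
  ∃ y ∈ K, IsConj x y

theorem IsConjInto.mono (hx : IsConjInto x K) (hKL : K ≤ L) : IsConjInto x L :=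
  hx.imp fun _ h => ⟨hKL h.1, h.2⟩

theorem IsConjInto.congr_isConj (hx : IsConjInto x K) (hxy : IsConj x y) : IsConjInto y K :=
  hx.imp fun _ h => ⟨h.1, hxy.symm.trans h.2⟩

theorem IsConjInto.map (hx : IsConjInto x K) (f : G →* H) : IsConjInto (f x) (K.map f) :=
  let ⟨y, hy, hxy⟩ := hx
  ⟨f y, mem_map_of_mem f hy, f.map_isConj hxy⟩

theorem IsConjInto.map_closure {s : Set G} (hx : IsConjInto x (closure s)) {f : G →* H}
    {L : Subgroup H} (hf : ∀ y ∈ s, f y ∈ L) : IsConjInto (f x) L :=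
  (hx.map f).mono <| by
    rw [MonoidHom.map_closure, closure_le]
    exact Set.image_subset_iff.2 hf

end ConjInto

section ConjSupport

variable (b : FreeGroupBasis I G) {x : G}

theorem exists_finset_mem_closure (x : G) : ∃ S : Finset I, x ∈ closure (b '' S) := by
  classical
  obtain ⟨w, rfl⟩ := b.repr.symm.surjective x
  induction w using FreeGroup.induction_on with
  | C1 => exact ⟨∅, by simp⟩
  | of j => exact ⟨{j}, subset_closure ⟨j, by simp, rfl⟩⟩
  | inv_of j hj => exact hj.imp fun _ h => by simpa using h
  | mul v w hv hw =>
    obtain ⟨S, hS⟩ := hv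
    obtain ⟨T, hT⟩ := hw
    refine ⟨S ∪ T, ?_⟩
    rw [map_mul, Finset.coe_union]
    exact mul_mem (closure_mono (Set.image_mono Set.subset_union_left) hS)
      (closure_mono (Set.image_mono Set.subset_union_right) hT)

theorem IsConjInto.inter {S T : Set I} (hS : IsConjInto x (closure (b '' S)))
    (hT : IsConjInto x (closure (b '' T))) : IsConjInto x (closure (b '' (S ∩ T))) := by
  classical
  -- Up to conjugacy, the retraction onto the subgroup generated by `S` fixes `x`.
  let ρ : G →* G := b.lift fun j => if j ∈ S then b j else 1
  have ρ_basis (j : I) : ρ (b j) = if j ∈ S then b j else 1 := by simp [ρ]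
  obtain ⟨y, hy, hxy⟩ := hS
  have ρ_y : ρ y = y := by
    refine MonoidHom.eqOn_closure (f := ρ) (g := .id G) ?_ hy
    rintro _ ⟨j, hj, rfl⟩
    simp [ρ_basis, hj]
  have ρ_x : IsConj (ρ x) x := (ρ_y ▸ ρ.map_isConj hxy).trans hxy.symm
  refine (hT.map_closure ?_).congr_isConj ρ_x
  rintro _ ⟨j, hj, rfl⟩
  rw [ρ_basis]
  split_ifs with hjS
  · exact subset_closure ⟨j, ⟨hjS, hj⟩, rfl⟩
  · exact one_mem _

theorem exists_finset_isLeast_isConjInto (x : G) :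
    ∃ S : Finset I, IsLeast {T : Set I | IsConjInto x (closure (b '' T))} S := by
  classical
  obtain ⟨S₀, hS₀⟩ := exists_finset_mem_closure b x
  obtain ⟨S, hS⟩ := exists_minimal_of_wellFoundedLT
    (fun S : Finset I => IsConjInto x (closure (b '' S))) ⟨S₀, x, hS₀, .refl x⟩
  refine ⟨S, hS.prop, fun T hT => ?_⟩
  have hST : S ≤ S.filter (· ∈ T) := by
    refine hS.le_of_le ?_ (Finset.filter_subset _ S)
    rw [Finset.coe_filter]
    exact hS.prop.inter b hT
  exact fun j hj => (Finset.mem_filter.1 (hST hj)).2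

/-- The conjugacy support of `x` in the basis `b`: the least set of basis elements generating a
subgroup into which `x` is conjugate. -/
def conjSupport (x : G) : Set I :=
  sInf {S | IsConjInto x (closure (b '' S))}

theorem finite_conjSupport (x : G) : (conjSupport b x).Finite := by
  obtain ⟨S, hS⟩ := exists_finset_isLeast_isConjInto b x
  rw [conjSupport, hS.csInf_eq]
  exact S.finite_toSet

theorem isConjInto_closure_iff {S : Set I} :
    IsConjInto x (closure (b '' S)) ↔ conjSupport b x ⊆ S := by
  refine ⟨fun hS => sInf_le hS, fun hS => ?_⟩
  obtain ⟨T, hT⟩ := exists_finset_isLeast_isConjInto b x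
  rw [conjSupport, hT.csInf_eq] at hS
  exact hT.1.mono (closure_mono (Set.image_mono hS))

theorem eq_one_of_conjSupport_eq_empty (hx : conjSupport b x = ∅) : x = 1 := by
  obtain ⟨y, hy, hxy⟩ := (isConjInto_closure_iff b).2 hx.subset
  rw [Set.image_empty, Subgroup.closure_empty, mem_bot] at hy
  simpa [hy] using hxy

theorem conjSupport_subset_image {f : G →* G} (hf : IsConj (f x) x) {σ : I → I}
    (hσ : ∀ j ∈ conjSupport b x, f (b j) = b (σ j)) :
    conjSupport b x ⊆ σ '' conjSupport b x := by
  rw [← isConjInto_closure_iff b]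
  refine (((isConjInto_closure_iff b).2 subset_rfl).map_closure ?_).congr_isConj hf
  rintro _ ⟨j, hj, rfl⟩
  rw [hσ j hj]
  exact subset_closure ⟨σ j, ⟨j, hj, rfl⟩, rfl⟩

end ConjSupport

section Translation

/-- The automorphism of the free group on `I × ℤ` that translates the letters over `i : I` by the
integer `w i`. -/
def translate : Multiplicative (I → ℤ) →* MulAut (FreeGroup (I × ℤ)) where
  toFun w := FreeGroup.freeGroupCongr <|
    (Equiv.refl I).prodShear fun i => Equiv.addRight (w.toAdd i)
  map_one' := by
    ext p
    simp
  map_mul' v w := by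
    ext p
    simp [FreeGroup.map.comp, Function.comp_def, add_left_comm, add_comm]

@[simp]
theorem translate_of (w : Multiplicative (I → ℤ)) (p : I × ℤ) :
    translate w (.of p) = .of (p.1, p.2 + w.toAdd p.1) := by
  simp [translate]

theorem conjSupport_subset_of_isConj_translate {w : Multiplicative (I → ℤ)}
    {k : FreeGroup (I × ℤ)} (hk : IsConj (translate w k) k) :
    conjSupport (.ofFreeGroup (I × ℤ)) k ⊆ {p | w.toAdd p.1 = 0} := by
  rintro ⟨i, n⟩ hn
  by_contra hw
  set S := conjSupport (.ofFreeGroup (I × ℤ)) k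
  have hS : S ⊆ (fun p => (p.1, p.2 + w.toAdd p.1)) '' S :=
    conjSupport_subset_image _ (f := (translate w).toMonoidHom) hk fun p _ => by simp
  have orbit_mem (t : ℕ) : (i, n - t * w.toAdd i) ∈ S := by
    induction t with
    | zero => simpa using hn
    | succ t ih =>
      obtain ⟨⟨j, r⟩, hr, hjr⟩ := hS ih
      obtain ⟨rfl, hr'⟩ := Prod.mk.inj hjr
      convert hr using 2
      push_cast
      linarith
  refine Set.infinite_of_injective_forall_mem (fun s t hst => ?_) orbit_mem
    (finite_conjSupport _ k)
  simpa [show w.toAdd i ≠ 0 from hw] using hst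

/-- The automorphisms translating all letters of the free group on `I × ℤ` by the same integer. -/
def uniformTranslate (I : Type*) : Multiplicative ℤ →* MulAut (FreeGroup (I × ℤ)) :=
  translate.comp (AddMonoidHom.toMultiplicative (Pi.constAddMonoidHom I ℤ))

/-- The semidirect product in which `ℤ` translates all letters of the free group on `I × ℤ`. It is
free on `I` and one further element, the generator of `ℤ`. -/
abbrev TranslationProduct (I : Type*) : Type _ :=
  FreeGroup (I × ℤ) ⋊[uniformTranslate I] Multiplicative ℤ

@[simp]
theorem uniformTranslate_of (s : Multiplicative ℤ) (p : I × ℤ) :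
    uniformTranslate I s (.of p) = .of (p.1, p.2 + s.toAdd) := by
  simp [uniformTranslate]

theorem exists_isConj_uniformTranslate_of_isConj_inl {k l : FreeGroup (I × ℤ)}
    (h : IsConj (inl k : TranslationProduct I) (inl l)) :
    ∃ s : Multiplicative ℤ, IsConj k (uniformTranslate I s l) := by
  obtain ⟨c, hc⟩ := isConj_iff.1 h.symm
  refine ⟨c.right, (isConj_iff.2 ⟨c.left, ?_⟩).symm⟩
  rw [mul_inv_eq_iff_eq_mul] at hc ⊢
  simpa using congrArg SemidirectProduct.left hc

/-- The endomorphism of the translation product that translates the letters over `i : I` by `w i`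
and fixes the generator of `ℤ`. -/
def translateLeft (w : Multiplicative (I → ℤ)) : TranslationProduct I →* TranslationProduct I :=
  SemidirectProduct.map (translate w).toMonoidHom (.id _) fun s => by
    ext p
    simp [uniformTranslate, add_right_comm]

theorem conjSupport_subset_or_subset_of_isConj_translateLeft {A : Set I} [DecidablePred (· ∈ A)]
    {k : FreeGroup (I × ℤ)}
    (hk : IsConj (translateLeft (ofAdd fun i => if i ∈ A then -1 else 0) (inl k)) (inl k)) :
    conjSupport (.ofFreeGroup (I × ℤ)) k ⊆ Prod.fst ⁻¹' A ∨
      conjSupport (.ofFreeGroup (I × ℤ)) k ⊆ Prod.fst ⁻¹' Aᶜ := by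
  set w : Multiplicative (I → ℤ) := ofAdd fun i => if i ∈ A then -1 else 0
  rw [translateLeft, map_inl] at hk
  obtain ⟨s, hs⟩ := exists_isConj_uniformTranslate_of_isConj_inl hk
  set c : Multiplicative (I → ℤ) := ofAdd fun _ => s.toAdd
  have translate_c : translate c = uniformTranslate I s := rfl
  have hcw : IsConj (translate (c⁻¹ * w) k) k := by
    rw [← translate_c] at hs
    simpa only [map_mul, map_inv, MulAut.mul_apply, MulEquiv.coe_toMonoidHom,
      MulAut.inv_apply_self] using (translate c)⁻¹.toMonoidHom.map_isConj hs
  have support_subset := conjSupport_subset_of_isConj_translate hcw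
  by_cases hs₀ : s.toAdd = 0
  · right
    intro p hp hpA
    simpa [c, w, hs₀, show p.1 ∈ A from hpA] using support_subset hp
  · left
    intro p hp
    by_contra hpA
    exact hs₀ (by simpa [c, w, show p.1 ∉ A from hpA] using support_subset hp)

end Translation

section PartialConj

variable (b : FreeGroupBasis I G) (t : I) (ε : G →* Multiplicative ℤ)

/-- The homomorphism sending the basis element `b j` to the product of the letter `(j, 0)` and the
element `ε (b j)` of `ℤ`, except that `b t` is sent to the element `ε (b t)` of `ℤ`. -/
def toTranslationProduct [DecidableEq I] : G →* TranslationProduct I :=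
  b.lift fun j => (if j = t then 1 else inl (.of (j, 0))) * inr (ε (b j))

/-- The homomorphism sending the generator of `ℤ` to `b t`; it is a left inverse of
`toTranslationProduct` when `ε (b t)` is the generator of `ℤ`. -/
def ofTranslationProduct : TranslationProduct I →* G :=
  SemidirectProduct.lift
    (FreeGroup.lift fun p =>
      MulAut.conj (b t ^ p.2) (b p.1 * zpowersHom G (b t) (ε (b p.1))⁻¹))
    (zpowersHom G (b t)) fun s => by
      ext p
      simp [uniformTranslate, add_comm p.2, zpow_add]

variable {b t ε}

theorem toTranslationProduct_self [DecidableEq I] :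
    toTranslationProduct b t ε (b t) = inr (ε (b t)) := by
  simp [toTranslationProduct]

theorem toTranslationProduct_of_ne [DecidableEq I] {j : I} (hj : j ≠ t) :
    toTranslationProduct b t ε (b j) = inl (.of (j, 0)) * inr (ε (b j)) := by
  simp [toTranslationProduct, hj]

theorem right_toTranslationProduct [DecidableEq I] (x : G) :
    (toTranslationProduct b t ε x).right = ε x := by
  suffices rightHom.comp (toTranslationProduct b t ε) = ε from DFunLike.congr_fun this x
  refine b.ext_hom _ _ fun j => ?_
  rcases eq_or_ne j t with rfl | hj
  · simp [toTranslationProduct_self]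
  · simp [toTranslationProduct_of_ne hj]

theorem ofTranslationProduct_toTranslationProduct [DecidableEq I] (hε : ε (b t) = ofAdd 1)
    (x : G) : ofTranslationProduct b t ε (toTranslationProduct b t ε x) = x := by
  suffices (ofTranslationProduct b t ε).comp (toTranslationProduct b t ε) = .id G from
    DFunLike.congr_fun this x
  refine b.ext_hom _ _ fun j => ?_
  rcases eq_or_ne j t with rfl | hj
  · simp [toTranslationProduct_self, ofTranslationProduct, hε]
  · simp [toTranslationProduct_of_ne hj, ofTranslationProduct]

variable {A : Set I} {χ : G →* G}

theorem toTranslationProduct_partialConj [DecidableEq I] [DecidablePred (· ∈ A)] (ht : t ∉ A)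
    (hχ : ∀ j ∈ A, χ (b j) = (b t)⁻¹ * b j * b t) (hχ' : ∀ j ∉ A, χ (b j) = b j)
    (hε : ε (b t) = ofAdd 1) (x : G) :
    toTranslationProduct b t ε (χ x) =
      translateLeft (ofAdd fun i => if i ∈ A then -1 else 0) (toTranslationProduct b t ε x) := by
  set w : Multiplicative (I → ℤ) := ofAdd fun i => if i ∈ A then -1 else 0
  suffices (toTranslationProduct b t ε).comp χ =
      (translateLeft w).comp (toTranslationProduct b t ε) from DFunLike.congr_fun this x
  refine b.ext_hom _ _ fun j => ?_
  by_cases hjA : j ∈ A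
  · have hjt : j ≠ t := fun h => ht (h ▸ hjA)
    have conj_letter : (inr (ofAdd 1))⁻¹ * inl (.of (j, 0)) * inr (ofAdd 1) =
        (inl (.of (j, -1)) : TranslationProduct I) := by
      rw [← map_inv, ← inl_aut_inv, ← map_inv, uniformTranslate_of]
      simp
    calc toTranslationProduct b t ε (χ (b j))
      _ = (inr (ofAdd 1))⁻¹ * inl (.of (j, 0)) * inr (ofAdd 1) * inr (ε (b j)) := by
        rw [hχ j hjA, map_mul, map_mul, map_inv, toTranslationProduct_self, hε,
          toTranslationProduct_of_ne hjt]
        simp only [mul_assoc, ← map_mul, mul_comm (ε (b j))]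
      _ = inl (.of (j, -1)) * inr (ε (b j)) := by rw [conj_letter]
      _ = translateLeft w (toTranslationProduct b t ε (b j)) := by
        simp [toTranslationProduct_of_ne hjt, translateLeft, w, hjA]
  · rcases eq_or_ne j t with rfl | hjt
    · simp [hχ' j hjA, toTranslationProduct_self, translateLeft]
    · simp [hχ' j hjA, toTranslationProduct_of_ne hjt, translateLeft, w, hjA]

theorem isConjInto_or_isConjInto_of_isConj_partialConj {x : G} (ht : t ∉ A)
    (hχ : ∀ j ∈ A, χ (b j) = (b t)⁻¹ * b j * b t) (hχ' : ∀ j ∉ A, χ (b j) = b j)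
    (hε : ε (b t) = ofAdd 1) (hεx : ε x = 1) (hx : IsConj (χ x) x) :
    IsConjInto x (closure (b '' insert t A)) ∨ IsConjInto x (closure (b '' Aᶜ)) := by
  classical
  set k := (toTranslationProduct b t ε x).left
  have hk : toTranslationProduct b t ε x = inl k := by
    rw [← inl_left_mul_inr_right (toTranslationProduct b t ε x), right_toTranslationProduct, hεx,
      map_one, mul_one]
  have k_conj := (toTranslationProduct b t ε).map_isConj hx
  rw [toTranslationProduct_partialConj ht hχ hχ' hε, hk] at k_conj
  have x_eq : ofTranslationProduct b t ε (inl k) = x := by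
    rw [← hk, ofTranslationProduct_toTranslationProduct hε]
  have letter_mem {S : Set I} (htS : t ∈ S) (p : I × ℤ) (hp : p.1 ∈ S) :
      ofTranslationProduct b t ε (inl (.of p)) ∈ closure (b '' S) := by
    have ht : b t ∈ closure (b '' S) := subset_closure ⟨t, htS, rfl⟩
    have hp : b p.1 ∈ closure (b '' S) := subset_closure ⟨p.1, hp, rfl⟩
    simp only [ofTranslationProduct, lift_inl, FreeGroup.lift_apply_of, MulAut.conj_apply,
      zpowersHom_apply]
    exact mul_mem (mul_mem (zpow_mem ht _) (mul_mem hp (zpow_mem ht _)))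
      (inv_mem (zpow_mem ht _))
  have x_into {S : Set I} (htS : t ∈ S)
      (hS : conjSupport (.ofFreeGroup (I × ℤ)) k ⊆ Prod.fst ⁻¹' S) :
      IsConjInto x (closure (b '' S)) := by
    rw [← isConjInto_closure_iff] at hS
    rw [← x_eq]
    refine hS.map_closure (f := (ofTranslationProduct b t ε).comp inl) ?_
    rintro _ ⟨p, hp, rfl⟩
    exact letter_mem htS p hp
  exact (conjSupport_subset_or_subset_of_isConj_translateLeft k_conj).imp
    (fun h => x_into (Set.mem_insert t A) (h.trans (Set.preimage_mono (Set.subset_insert t A))))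
    (x_into ht)

end PartialConj

section HalfTwist

variable (b : FreeGroupBasis I G) {i j : I}

/-- The elementary Nielsen transformation replacing the basis element `b j` with `b i * b j`. -/
def nielsenBasis [DecidableEq I] (hij : i ≠ j) : FreeGroupBasis I G :=
  b.map <| MonoidHom.toMulEquiv (b.lift (Function.update b j (b i * b j)))
    (b.lift (Function.update b j ((b i)⁻¹ * b j)))
    (b.ext_hom _ _ fun k => by rcases eq_or_ne k j with rfl | hk <;> simp [*])
    (b.ext_hom _ _ fun k => by rcases eq_or_ne k j with rfl | hk <;> simp [*])

theorem nielsenBasis_self [DecidableEq I] (hij : i ≠ j) : nielsenBasis b hij j = b i * b j := by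
  simp [nielsenBasis]

theorem nielsenBasis_of_ne [DecidableEq I] (hij : i ≠ j) {k : I} (hk : k ≠ j) :
    nielsenBasis b hij k = b k := by
  simp [nielsenBasis, hk]

theorem closure_nielsenBasis_image_pair_le [DecidableEq I] (hij : i ≠ j) :
    closure (nielsenBasis b hij '' {j, i}) ≤ closure (b '' {i, j}) := by
  have hi : b i ∈ closure (b '' {i, j}) := subset_closure ⟨i, by simp, rfl⟩
  have hj : b j ∈ closure (b '' {i, j}) := subset_closure ⟨j, by simp, rfl⟩
  rw [closure_le, Set.image_pair, nielsenBasis_self, nielsenBasis_of_ne b hij hij]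
  exact Set.pair_subset (mul_mem hi hj) hi

theorem nielsenBasis_image_compl_singleton [DecidableEq I] (hij : i ≠ j) :
    nielsenBasis b hij '' {i}ᶜ = insert (b i * b j) (b '' {i, j}ᶜ) := by
  have compl_eq : ({i}ᶜ : Set I) = insert j {i, j}ᶜ := by
    ext k
    by_cases hk : k = j <;> simp [hk, hij.symm]
  rw [compl_eq, Set.image_insert_eq, nielsenBasis_self]
  refine congrArg _ (Set.image_congr fun k hk => nielsenBasis_of_ne b hij ?_)
  exact fun h => hk (Or.inr h)

/-- The exponent sum of the basis element `b j`, with values in `ℤ` written multiplicatively. -/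
def exponentSum [DecidableEq I] (j : I) : G →* Multiplicative ℤ :=
  b.lift (Pi.mulSingle j (ofAdd 1))

@[simp]
theorem exponentSum_basis [DecidableEq I] (j k : I) :
    exponentSum b j (b k) = (Pi.mulSingle j (ofAdd 1) : I → Multiplicative ℤ) k := by
  simp [exponentSum]

theorem mem_conjSupport_of_isConj {f : G →* G} {x : G} (hf : IsConj (f x) x) (hi : f (b i) = b j)
    (hne : ∀ k, k ≠ i → k ≠ j → f (b k) = b k) (hx : i ∈ conjSupport b x) :
    j ∈ conjSupport b x := by
  classical
  by_contra hj
  have subset_swap : conjSupport b x ⊆ Equiv.swap i j '' conjSupport b x := by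
    refine conjSupport_subset_image b hf fun k hk => ?_
    rcases eq_or_ne k i with rfl | hki
    · rw [hi, Equiv.swap_apply_left]
    · have hkj : k ≠ j := fun h => hj (h ▸ hk)
      rw [hne k hki hkj, Equiv.swap_apply_of_ne_of_ne hki hkj]
  obtain ⟨k, hk, hki⟩ := subset_swap hx
  rw [Equiv.swap_apply_eq_iff, Equiv.swap_apply_left] at hki
  exact hj (hki ▸ hk)

/-- The automorphism `α` acts on the basis `b` like an Artin generator of the braid group acting on
the strands `i` and `j`. -/
structure IsHalfTwist (i j : I) (α : MulAut G) : Prop where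
  map_left : α (b i) = b j
  map_right : α (b j) = (b j)⁻¹ * b i * b j
  map_of_ne : ∀ k, k ≠ i → k ≠ j → α (b k) = b k

namespace IsHalfTwist

variable {b} {α : MulAut G} {x : G}

theorem apply_apply_left (hα : IsHalfTwist b i j α) :
    α (α (b i)) = (b i * b j)⁻¹ * b i * (b i * b j) := by
  rw [hα.map_left, hα.map_right]
  group

theorem apply_apply_mul (hα : IsHalfTwist b i j α) : α (α (b i * b j)) = b i * b j := by
  simp [hα.map_left, hα.map_right, mul_assoc]

theorem mem_conjSupport_iff (hα : IsHalfTwist b i j α) (hx : IsConj (α x) x) :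
    i ∈ conjSupport b x ↔ j ∈ conjSupport b x := by
  have hx' : IsConj (α⁻¹ x) x := by simpa using (α⁻¹.toMonoidHom.map_isConj hx).symm
  constructor
  · exact mem_conjSupport_of_isConj b (f := α.toMonoidHom) hx hα.map_left hα.map_of_ne
  · refine mem_conjSupport_of_isConj b (f := α⁻¹.toMonoidHom) hx' ?_ fun k hkj hki => ?_
    · simp [← hα.map_left]
    · simpa [MulEquiv.symm_apply_eq] using (hα.map_of_ne k hki hkj).symm

variable [DecidableEq I]

theorem exponentSum_eq (hα : IsHalfTwist b i j α) (hij : i ≠ j) (hx : IsConj (α x) x) :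
    exponentSum b i x = exponentSum b j x := by
  have comp_eq : (exponentSum b j).comp α.toMonoidHom = exponentSum b i := by
    refine b.ext_hom _ _ fun k => ?_
    by_cases hki : k = i
    · simp [hki, hα.map_left]
    by_cases hkj : k = j
    · simp [hkj, hα.map_right, hij, hij.symm]
    · simp [hα.map_of_ne k hki hkj, hki, hkj]
  rw [← comp_eq]
  exact isConj_iff_eq.1 ((exponentSum b j).map_isConj hx)

theorem isConjInto_or_isConjInto (hα : IsHalfTwist b i j α) (hij : i ≠ j) {l : I} (hli : l ≠ i)
    (hlj : l ≠ j) (hx : IsConj (α x) x) (hl : exponentSum b j x = exponentSum b l x) :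
    IsConjInto x (closure (b '' {i, j})) ∨
      IsConjInto x (closure (insert (b i * b j) (b '' {i, j}ᶜ))) := by
  have hx₂ : IsConj (α (α x)) x := (α.toMonoidHom.map_isConj hx).trans hx
  rw [← nielsenBasis_image_compl_singleton b hij]
  refine (isConjInto_or_isConjInto_of_isConj_partialConj (t := j) (A := {i})
    (χ := α.toMonoidHom.comp α.toMonoidHom) (ε := exponentSum b j * (exponentSum b l)⁻¹)
    hij.symm ?_ ?_ ?_ ?_ hx₂).imp_left (.mono · (closure_nielsenBasis_image_pair_le b hij))
  · rintro _ rfl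
    simpa [nielsenBasis_self, nielsenBasis_of_ne b hij hij] using hα.apply_apply_left
  · intro k hki
    rcases eq_or_ne k j with rfl | hkj
    · simpa [nielsenBasis_self] using hα.apply_apply_mul
    · simp [nielsenBasis_of_ne b hij hkj, hα.map_of_ne k hki hkj]
  · simp [nielsenBasis_self, hij, hli.symm, hlj.symm]
  · simp [hl]

end IsHalfTwist

end HalfTwist

theorem map_partialProd {n : ℕ} (f : G →* H) (v : Fin n → G) (k : Fin (n + 1)) :
    f (Fin.partialProd v k) = Fin.partialProd (f ∘ v) k := by
  simp [Fin.partialProd, map_list_prod, List.map_take, List.map_ofFn]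

section PrefixProducts

variable {n : ℕ} (b : FreeGroupBasis (Fin n) G)

/-- The basis of the products `b 0 * ⋯ * b k`. -/
def prefixProdBasis : FreeGroupBasis (Fin n) G :=
  let w : Fin (n + 1) → G := Fin.cons 1 b
  let f : G →* G := b.lift fun k => Fin.partialProd b k.succ
  let g : G →* G := b.lift fun k => (w k.castSucc)⁻¹ * w k.succ
  have f_w (k : Fin (n + 1)) : f (w k) = Fin.partialProd b k := by
    cases k using Fin.cases <;> simp [f, w]
  have g_partialProd (k : Fin (n + 1)) : g (Fin.partialProd b k) = w k := by
    have g_comp : g ∘ b = fun k => (w k.castSucc)⁻¹ * w k.succ := by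
      ext k
      simp [g]
    rw [map_partialProd, g_comp]
    simpa [w] using congrFun (Fin.partialProd_left_inv w) k
  b.map <| MonoidHom.toMulEquiv f g
    (b.ext_hom _ _ fun k => by simp [f, g_partialProd, w])
    (b.ext_hom _ _ fun k => by simpa [g, f_w] using Fin.partialProd_right_inv b k)

theorem prefixProdBasis_apply (k : Fin n) : prefixProdBasis b k = Fin.partialProd b k.succ := by
  simp [prefixProdBasis]

theorem partialProd_mem_closure_prefixProdBasis {i : Fin n} {k : Fin (n + 1)} (hk : k ≠ i.succ) :
    Fin.partialProd b k ∈ closure (prefixProdBasis b '' {i}ᶜ) := by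
  cases k using Fin.cases with
  | zero => simp
  | succ k =>
    rw [← prefixProdBasis_apply]
    exact subset_closure ⟨k, fun h => hk (congrArg Fin.succ h), rfl⟩

end PrefixProducts

section Chain

variable {m : ℕ} {b : FreeGroupBasis (Fin (m + 1)) G} {x : G}

theorem closure_insert_le_closure_prefixProdBasis (i : Fin m) :
    closure (insert (b i.castSucc * b i.succ) (b '' {i.castSucc, i.succ}ᶜ)) ≤
      closure (prefixProdBasis b '' {i.castSucc}ᶜ) := by
  have apply_eq (j : Fin (m + 1)) :
      b j = (Fin.partialProd b j.castSucc)⁻¹ * Fin.partialProd b j.succ :=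
    (Fin.partialProd_right_inv b j).symm
  rw [closure_le, Set.insert_subset_iff, Set.image_subset_iff]
  constructor
  · rw [apply_eq i.castSucc, apply_eq i.succ, ← Fin.succ_castSucc, mul_assoc,
      mul_inv_cancel_left]
    refine mul_mem (inv_mem (partialProd_mem_closure_prefixProdBasis b ?_))
      (partialProd_mem_closure_prefixProdBasis b ?_)
    · simp [Fin.ext_iff]
    · simp [Fin.ext_iff]
  · intro j hj
    rw [Set.mem_preimage, apply_eq j]
    simp only [Set.mem_compl_iff, Set.mem_insert_iff, Set.mem_singleton_iff, not_or,
      Fin.ext_iff, Fin.val_castSucc, Fin.val_succ] at hj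
    refine mul_mem (inv_mem (partialProd_mem_closure_prefixProdBasis b ?_))
      (partialProd_mem_closure_prefixProdBasis b ?_)
    · simpa [Fin.ext_iff] using hj.2
    · simpa [Fin.ext_iff] using hj.1

theorem exists_isConj_prod_zpow_of_forall_isConjInto
    (h : ∀ i : Fin m, IsConjInto x
      (closure (insert (b i.castSucc * b i.succ) (b '' {i.castSucc, i.succ}ᶜ)))) :
    ∃ k : ℤ, IsConj x ((List.ofFn b).prod ^ k) := by
  have prod_eq : prefixProdBasis b (Fin.last m) = (List.ofFn b).prod := by
    simp [prefixProdBasis_apply, Fin.partialProd, List.take_of_length_le]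
  have support_subset : conjSupport (prefixProdBasis b) x ⊆ {Fin.last m} := by
    intro j hj
    cases j using Fin.lastCases with
    | last => rfl
    | cast i =>
      have avoids_i := (h i).mono (closure_insert_le_closure_prefixProdBasis i)
      exact absurd rfl ((isConjInto_closure_iff _).1 avoids_i hj)
  obtain ⟨y, hy, hxy⟩ := (isConjInto_closure_iff _).2 support_subset
  rw [Set.image_singleton, prod_eq, ← zpowers_eq_closure] at hy
  obtain ⟨k, rfl⟩ := hy
  exact ⟨k, hxy⟩

theorem apply_eq_apply_of_castSucc_eq_succ {β : Type*} {f : Fin (m + 1) → β}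
    (hf : ∀ i : Fin m, f i.castSucc = f i.succ) (j k : Fin (m + 1)) : f j = f k := by
  have eq_zero (j : Fin (m + 1)) : f j = f 0 :=
    j.induction rfl fun i hi => (hf i).symm.trans hi
  rw [eq_zero j, eq_zero k]

variable {φ : Fin m → MulAut G}

theorem exponentSum_eq_of_forall_isHalfTwist (hφ : ∀ i, IsHalfTwist b i.castSucc i.succ (φ i))
    (hx : ∀ i, IsConj (φ i x) x) (j k : Fin (m + 1)) : exponentSum b j x = exponentSum b k x :=
  apply_eq_apply_of_castSucc_eq_succ (f := (exponentSum b · x))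
    (fun i => (hφ i).exponentSum_eq i.castSucc_lt_succ.ne (hx i)) j k

theorem eq_one_of_isConjInto_of_forall_isHalfTwist
    (hφ : ∀ i, IsHalfTwist b i.castSucc i.succ (φ i)) (hx : ∀ i, IsConj (φ i x) x)
    {S : Set (Fin (m + 1))} (hS : IsConjInto x (closure (b '' S))) {l : Fin (m + 1)}
    (hl : l ∉ S) : x = 1 := by
  have mem_iff (j : Fin (m + 1)) : (j ∈ conjSupport b x) = (l ∈ conjSupport b x) :=
    apply_eq_apply_of_castSucc_eq_succ (f := (· ∈ conjSupport b x))
      (fun i => propext ((hφ i).mem_conjSupport_iff (hx i))) j l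
  have l_notMem : l ∉ conjSupport b x := fun h => hl ((isConjInto_closure_iff b).1 hS h)
  exact eq_one_of_conjSupport_eq_empty b
    (Set.eq_empty_of_forall_notMem fun j hj => l_notMem (mem_iff j ▸ hj))

end Chain

end BraidAction

open BraidAction in
/-- let `F` be free on `u₀, …, u_m` (`n = m+1 ≥ 3` generators, so `m ≥ 2`)
with the braid group acting by Artin's representation, i.e. by the automorphisms
`φᵢ : uᵢ ↦ u_{i+1}, u_{i+1} ↦ u_{i+1}⁻¹ uᵢ u_{i+1}, u_j ↦ u_j` for `i : Fin m`.
If `x ∈ F` satisfies `φᵢ(x)` conjugate to `x` for all `i`, then `x` is conjugate to a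
power of `u₀u₁⋯u_m`. -/
theorem stmt17 (m : ℕ) (hm : 2 ≤ m)
    (φ : Fin m → MulAut (FreeGroup (Fin (m + 1))))
    (hφ : ∀ (i : Fin m) (j : Fin (m + 1)),
      φ i (FreeGroup.of j) =
        if j = i.castSucc then FreeGroup.of i.succ
        else if j = i.succ then
          (FreeGroup.of i.succ)⁻¹ * FreeGroup.of i.castSucc * FreeGroup.of i.succ
        else FreeGroup.of j)
    (x : FreeGroup (Fin (m + 1)))
    (hx : ∀ i : Fin m, IsConj (φ i x) x) :
    ∃ k : ℤ, IsConj x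
      (((List.ofFn fun j : Fin (m + 1) => FreeGroup.of j).prod) ^ k) := by
  let u := FreeGroupBasis.ofFreeGroup (Fin (m + 1))
  have half_twist (i : Fin m) : IsHalfTwist u i.castSucc i.succ (φ i) :=
    { map_left := by simp [u, hφ]
      map_right := by simp [u, hφ, i.castSucc_lt_succ.ne']
      map_of_ne := fun j hj hj' => by simp [u, hφ, hj, hj'] }
  by_cases h : ∀ i : Fin m, IsConjInto x
      (.closure (insert (u i.castSucc * u i.succ) (u '' {i.castSucc, i.succ}ᶜ)))
  · exact exists_isConj_prod_zpow_of_forall_isConjInto h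
  · obtain ⟨i, hi⟩ := not_forall.1 h
    obtain ⟨l, hl, hl'⟩ := Fin.exists_ne_and_ne_of_two_lt i.castSucc i.succ (by lia)
    have exponentSum_eq : exponentSum u i.succ x = exponentSum u l x :=
      exponentSum_eq_of_forall_isHalfTwist half_twist hx i.succ l
    have x_into : IsConjInto x (.closure (u '' {i.castSucc, i.succ})) :=
      ((half_twist i).isConjInto_or_isConjInto i.castSucc_lt_succ.ne hl hl' (hx i)
        exponentSum_eq).resolve_right hi
    have x_eq_one : x = 1 :=
      eq_one_of_isConjInto_of_forall_isHalfTwist half_twist hx x_into (l := l) (by simp [hl, hl'])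
    exact ⟨0, by simp [x_eq_one]⟩
end
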